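/- arXiv:2307.15300 — 7 statements merged into one kernel-verified Lean document; each statement's English description precedes it below -/
import Mathlib

section
/- Both the numerator and the denominator in the formula for the threshold k are strictly positive: δ1δ3(1+η) − (δ3+ηδ1)γ2 − a0(δ1−δ3)γ2 > 0 and (1+η)(δ1δ3 + γ2) − (δ3+ηδ1)γ2 − (δ1+ηδ3) − a1(γ2−1)(δ1−δ3) > 0. -/
/-!
The exponents `δ1`, `δ3`, `γ2` are roots of quadratics `x ^ 2 = m * x + c`. The constant `c` of `δ1`
is positive, so `0` lies strictly between the roots and `δ1 < 0`. The constant of `γ2` satisfies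
`1 < m + c`, so `1` lies strictly between the roots and `1 < γ2`. Finally `δ3 ≤ δ1`, because the
smaller root decreases in `c`.

The denominator is the numerator with `a0` replaced by `a1` and all three exponents translated by
`-1`. Both are therefore values of one form in `η`, `a`, `δ1`, `δ3`, `γ`, which is nonincreasing in
`a` when `δ3 ≤ δ1` and `0 ≤ γ`. At `a = 1` it factors as `(1 + η) * (δ1 * (δ3 - γ))`, which is
positive when `δ3 ≤ δ1 < 0 ≤ γ`.
-/

section QuadraticRoots

/-- The smaller root of `x ^ 2 = m * x + c`; equal to `m / 2` if the discriminant is negative. -/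
noncomputable def lowerRoot (m c : ℝ) : ℝ := (m - √(m ^ 2 + 4 * c)) / 2

/-- The larger root of `x ^ 2 = m * x + c`; equal to `m / 2` if the discriminant is negative. -/
noncomputable def upperRoot (m c : ℝ) : ℝ := (m + √(m ^ 2 + 4 * c)) / 2

theorem mem_Ioo_lowerRoot_upperRoot {m c x : ℝ} :
    x ∈ Set.Ioo (lowerRoot m c) (upperRoot m c) ↔ x ^ 2 < m * x + c := by
  have complete_square : x ^ 2 < m * x + c ↔ (2 * x - m) ^ 2 < m ^ 2 + 4 * c := by
    constructor <;> intro h <;> linarith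
  rw [complete_square, Real.sq_lt, Set.mem_Ioo, lowerRoot, upperRoot]
  constructor <;> rintro ⟨hl, hu⟩ <;> constructor <;> linarith

theorem lowerRoot_neg {m c : ℝ} (hc : 0 < c) : lowerRoot m c < 0 :=
  (mem_Ioo_lowerRoot_upperRoot.mpr (by simpa using hc)).1

theorem one_lt_upperRoot {m c : ℝ} (hc : 1 < m + c) : 1 < upperRoot m c :=
  (mem_Ioo_lowerRoot_upperRoot.mpr (by simpa using hc)).2

theorem lowerRoot_antitone (m : ℝ) : Antitone (lowerRoot m) := by
  intro c d hcd
  unfold lowerRoot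
  gcongr

end QuadraticRoots

section ThresholdForm

variable {R : Type*} [CommRing R]

/-- The numerator of the threshold `k` as a function of its parameters, with `a` in the place of
`a0` and `γ` in that of `γ2`. -/
def thresholdForm (η a δ1 δ3 γ : R) : R :=
  δ1 * δ3 * (1 + η) - (δ3 + η * δ1) * γ - a * (δ1 - δ3) * γ

theorem thresholdForm_sub_one (η a δ1 δ3 γ : R) :
    thresholdForm η a (δ1 - 1) (δ3 - 1) (γ - 1) =
      (1 + η) * (δ1 * δ3 + γ) - (δ3 + η * δ1) * γ - (δ1 + η * δ3)
        - a * (γ - 1) * (δ1 - δ3) := by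
  unfold thresholdForm
  ring

theorem thresholdForm_one (η δ1 δ3 γ : R) :
    thresholdForm η 1 δ1 δ3 γ = (1 + η) * (δ1 * (δ3 - γ)) := by
  unfold thresholdForm
  ring

variable [LinearOrder R] [IsStrictOrderedRing R] {η a δ1 δ3 γ : R}

theorem thresholdForm_antitone (hδ : δ3 ≤ δ1) (hγ : 0 ≤ γ) :
    Antitone fun a ↦ thresholdForm η a δ1 δ3 γ := by
  intro a b hab
  have hδ' : 0 ≤ δ1 - δ3 := sub_nonneg.mpr hδ
  exact sub_le_sub_left
    (mul_le_mul_of_nonneg_right (mul_le_mul_of_nonneg_right hab hδ') hγ) _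

theorem thresholdForm_pos (hη : 0 < 1 + η) (ha : a ≤ 1) (hδ1 : δ1 < 0) (hδ : δ3 ≤ δ1)
    (hγ : 0 ≤ γ) : 0 < thresholdForm η a δ1 δ3 γ :=
  calc
    0 < (1 + η) * (δ1 * (δ3 - γ)) :=
      mul_pos hη (mul_pos_of_neg_of_neg hδ1 (by linarith))
    _ = thresholdForm η 1 δ1 δ3 γ := (thresholdForm_one η δ1 δ3 γ).symm
    _ ≤ thresholdForm η a δ1 δ3 γ := thresholdForm_antitone hδ hγ ha

end ThresholdForm

theorem stmt_2 (μ1 μ2 ρ σ lam0 lam1 η a0 a1 m δ1 δ3 γ2 : ℝ)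
    (hσ : 0 < σ) (hlam0 : 0 < lam0) (hlam1 : 0 < lam1)
    (hμ1 : μ1 < ρ) (hμ2 : μ2 < ρ)
    (hm : m = 1 + (μ1 - μ2) / σ)
    (hη : η = lam0 / lam1) (ha0 : a0 = lam0 / (ρ + lam0 - μ1)) (ha1 : a1 = lam0 / (ρ + lam0 - μ2))
    (hδ1 : δ1 = (m - Real.sqrt (m ^ 2 + 4 * (ρ - μ1) / σ)) / 2)
    (hδ3 : δ3 = (m - Real.sqrt (m ^ 2 + 4 * (ρ + lam0 + lam1 - μ1) / σ)) / 2)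
    (hγ2 : γ2 = (m + Real.sqrt (m ^ 2 + 4 * (ρ + lam0 - μ1) / σ)) / 2) :
    δ1 * δ3 * (1 + η) - (δ3 + η * δ1) * γ2 - a0 * (δ1 - δ3) * γ2 > 0 ∧
      (1 + η) * (δ1 * δ3 + γ2) - (δ3 + η * δ1) * γ2 - (δ1 + η * δ3) - a1 * (γ2 - 1) * (δ1 - δ3) > 0 := by
  rw [mul_div_assoc, ← lowerRoot] at hδ1 hδ3
  rw [mul_div_assoc, ← upperRoot] at hγ2
  have hδ1_neg : δ1 < 0 := hδ1 ▸ lowerRoot_neg (div_pos (by linarith) hσ)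
  have hδ3_le : δ3 ≤ δ1 := by
    rw [hδ1, hδ3]
    exact lowerRoot_antitone m (by gcongr; linarith)
  have hγ2_gt : 1 < γ2 := by
    have m_add_eq : m + (ρ + lam0 - μ1) / σ = 1 + (ρ + lam0 - μ2) / σ := by rw [hm]; ring
    have h_pos : 0 < (ρ + lam0 - μ2) / σ := div_pos (by linarith) hσ
    exact hγ2 ▸ one_lt_upperRoot (by linarith)
  have hη_pos : 0 < η := hη ▸ div_pos hlam0 hlam1
  have ha0_le : a0 ≤ 1 := ha0 ▸ div_le_one_of_le₀ (by linarith) (by linarith)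
  have ha1_le : a1 ≤ 1 := ha1 ▸ div_le_one_of_le₀ (by linarith) (by linarith)
  constructor
  · exact thresholdForm_pos (by linarith) ha0_le hδ1_neg hδ3_le (by linarith)
  · rw [← thresholdForm_sub_one]
    exact thresholdForm_pos (by linarith) ha1_le (by linarith) (by linarith) (by linarith)
end

section
/- The threshold k satisfies the strict lower bound k > (−δ1/(1−δ1)) · (β_s/β_b). -/
/-!
`δ1 < 0` and `γ2 > 1` are roots of the characteristic equations `σ (t² - m t) = r` with `r = ρ - μ1`
and `r = ρ + λ0 - μ1`. Writing `k = (N / D) (β_s / β_b)` and cross-multiplying the claim leaves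
`N (1 - δ1) + δ1 D = (δ1 - δ3) G`, where `D > 0` because `a1 ≤ 1`, while `δ3 < δ1` and `G` involves
neither `η` nor `δ3`. If `δ2` is the negative root belonging to `γ2`, evaluating the quadratics at
`0`, `1` and `δ1` factors `ρ + λ0 - μ1`, `ρ + λ0 - μ2` and `λ0`, hence also `a0` and `a1`, and `G`
collapses to
`(γ2 - δ1) (-δ1) (1 - δ1) / ((-δ2) (1 - δ2)) > 0`.
-/

section CharacteristicRoots

/-- The smaller root of the characteristic equation `σ (t² - m t) = r` for `0 < σ`; it is negative
when `0 < r`. The radical is written as in the formulas for `δ1` and `δ3`, and has junk value `0`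
if the discriminant is negative. -/
noncomputable def negRoot (σ m r : ℝ) : ℝ := (m - √(m ^ 2 + 4 * r / σ)) / 2

/-- The larger root of the characteristic equation `σ (t² - m t) = r` for `0 < σ`, with the radical
written as in the formula for `γ2`. -/
noncomputable def posRoot (σ m r : ℝ) : ℝ := (m + √(m ^ 2 + 4 * r / σ)) / 2

variable {σ m r s t : ℝ}

theorem mul_sub_negRoot_mul_sub_posRoot (hσ : σ ≠ 0) (hdisc : 0 ≤ m ^ 2 + 4 * r / σ) (t : ℝ) :
    σ * ((t - negRoot σ m r) * (t - posRoot σ m r)) = σ * (t ^ 2 - m * t) - r := by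
  have hsq := Real.sq_sqrt hdisc
  have hr : σ * (r / σ) = r := mul_div_cancel₀ r hσ
  unfold negRoot posRoot
  linear_combination (-σ / 4) * hsq - hr

theorem mul_negRoot_sq_sub (hσ : σ ≠ 0) (hdisc : 0 ≤ m ^ 2 + 4 * r / σ) :
    σ * (negRoot σ m r ^ 2 - m * negRoot σ m r) = r := by
  linear_combination -mul_sub_negRoot_mul_sub_posRoot hσ hdisc (negRoot σ m r)

theorem sq_two_mul_sub_lt_discrim (hσ : 0 < σ) (ht : σ * (t ^ 2 - m * t) < r) :
    (2 * t - m) ^ 2 < m ^ 2 + 4 * r / σ := by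
  have h : t ^ 2 - m * t < r / σ := (lt_div_iff₀' hσ).2 ht
  linarith [mul_div_assoc 4 r σ]

theorem negRoot_lt (hσ : 0 < σ) (ht : σ * (t ^ 2 - m * t) < r) : negRoot σ m r < t := by
  have h := Real.neg_sqrt_lt_of_sq_lt (sq_two_mul_sub_lt_discrim hσ ht)
  unfold negRoot
  linarith

theorem lt_posRoot (hσ : 0 < σ) (ht : σ * (t ^ 2 - m * t) < r) : t < posRoot σ m r := by
  have h := Real.lt_sqrt_of_sq_lt (sq_two_mul_sub_lt_discrim hσ ht)
  unfold posRoot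
  linarith

theorem negRoot_neg (hσ : 0 < σ) (hr : 0 < r) : negRoot σ m r < 0 :=
  negRoot_lt hσ (by simpa using hr)

theorem posRoot_pos (hσ : 0 < σ) (hr : 0 < r) : 0 < posRoot σ m r :=
  lt_posRoot hσ (by simpa using hr)

theorem one_lt_posRoot (hσ : 0 < σ) (hr : σ * (1 - m) < r) : 1 < posRoot σ m r :=
  lt_posRoot hσ (by simpa using hr)

theorem negRoot_lt_negRoot (hσ : 0 < σ) (hdisc : 0 ≤ m ^ 2 + 4 * r / σ) (hrs : r < s) :
    negRoot σ m s < negRoot σ m r :=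
  negRoot_lt hσ ((mul_negRoot_sq_sub hσ.ne' hdisc).trans_lt hrs)

theorem neg_mul_negRoot_mul_posRoot (hσ : σ ≠ 0) (hdisc : 0 ≤ m ^ 2 + 4 * r / σ) :
    σ * (-negRoot σ m r * posRoot σ m r) = r := by
  linear_combination -mul_sub_negRoot_mul_sub_posRoot hσ hdisc 0

theorem mul_one_sub_negRoot_mul_posRoot_sub_one (hσ : σ ≠ 0) (hdisc : 0 ≤ m ^ 2 + 4 * r / σ) :
    σ * ((1 - negRoot σ m r) * (posRoot σ m r - 1)) = r + σ * (m - 1) := by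
  linear_combination -mul_sub_negRoot_mul_sub_posRoot hσ hdisc 1

theorem mul_posRoot_sub_mul_sub_negRoot (hσ : σ ≠ 0) (hdisc_r : 0 ≤ m ^ 2 + 4 * r / σ)
    (hdisc_s : 0 ≤ m ^ 2 + 4 * s / σ) :
    σ * ((posRoot σ m s - negRoot σ m r) * (negRoot σ m r - negRoot σ m s)) = s - r := by
  linear_combination -mul_sub_negRoot_mul_sub_posRoot hσ hdisc_s (negRoot σ m r)
    - mul_negRoot_sq_sub hσ hdisc_r

end CharacteristicRoots

section Threshold

variable {η a₀ a₁ δ₁ δ₃ γ₂ : ℝ}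

/-- The numerator of the threshold `k`, without the transaction cost factor `β_s / β_b`. -/
def thresholdNum (η a₀ δ₁ δ₃ γ₂ : ℝ) : ℝ :=
  δ₁ * δ₃ * (1 + η) - (δ₃ + η * δ₁) * γ₂ - a₀ * (δ₁ - δ₃) * γ₂

/-- The denominator of the threshold `k`, without the transaction cost factor `β_s / β_b`. -/
def thresholdDen (η a₁ δ₁ δ₃ γ₂ : ℝ) : ℝ :=
  (1 + η) * (δ₁ * δ₃ + γ₂) - (δ₃ + η * δ₁) * γ₂ - (δ₁ + η * δ₃) - a₁ * (γ₂ - 1) * (δ₁ - δ₃)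

/-- The cofactor of `δ₁ - δ₃` in the cross-multiplied difference between the threshold ratio
`thresholdNum / thresholdDen` and `-δ₁ / (1 - δ₁)`; its sign decides the comparison. -/
def thresholdGap (a₀ a₁ δ₁ γ₂ : ℝ) : ℝ :=
  γ₂ - δ₁ - a₀ * γ₂ * (1 - δ₁) - a₁ * (γ₂ - 1) * δ₁

theorem thresholdNum_mul_add_mul_thresholdDen (η a₀ a₁ δ₁ δ₃ γ₂ : ℝ) :
    thresholdNum η a₀ δ₁ δ₃ γ₂ * (1 - δ₁) + δ₁ * thresholdDen η a₁ δ₁ δ₃ γ₂ =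
      (δ₁ - δ₃) * thresholdGap a₀ a₁ δ₁ γ₂ := by
  unfold thresholdNum thresholdDen thresholdGap
  ring

theorem thresholdDen_pos (hη : 0 ≤ η) (ha₁ : a₁ ≤ 1) (hδ₁ : δ₁ ≤ 0) (hδ : δ₃ ≤ δ₁)
    (hγ₂ : 1 ≤ γ₂) : 0 < thresholdDen η a₁ δ₁ δ₃ γ₂ := by
  have hx : 0 ≤ -δ₁ := neg_nonneg.2 hδ₁
  have hy : 0 ≤ -δ₃ := neg_nonneg.2 (hδ.trans hδ₁)
  have : 0 < γ₂ := one_pos.trans_le hγ₂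
  have hdiscount : 0 ≤ (1 - a₁) * ((γ₂ - 1) * (δ₁ - δ₃)) :=
    mul_nonneg (sub_nonneg.2 ha₁) (mul_nonneg (sub_nonneg.2 hγ₂) (sub_nonneg.2 hδ))
  have hrest : 0 < (1 + η) * (-δ₁ * -δ₃ + γ₂) + η * -δ₁ * γ₂ + (1 + η) * -δ₃ + -δ₁ * γ₂ := by
    positivity
  calc
    0 < _ := add_pos_of_nonneg_of_pos hdiscount hrest
    _ = thresholdDen η a₁ δ₁ δ₃ γ₂ := by unfold thresholdDen; ring

theorem neg_div_one_sub_lt_thresholdNum_div_thresholdDen (hδ₁ : δ₁ < 1) (hδ : δ₃ < δ₁)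
    (hden : 0 < thresholdDen η a₁ δ₁ δ₃ γ₂) (hgap : 0 < thresholdGap a₀ a₁ δ₁ γ₂) :
    -δ₁ / (1 - δ₁) < thresholdNum η a₀ δ₁ δ₃ γ₂ / thresholdDen η a₁ δ₁ δ₃ γ₂ := by
  rw [div_lt_div_iff₀ (sub_pos.2 hδ₁) hden]
  linarith [thresholdNum_mul_add_mul_thresholdDen η a₀ a₁ δ₁ δ₃ γ₂,
    mul_pos (sub_pos.2 hδ) hgap]

theorem thresholdGap_eq_of_mul_eq {δ₂ : ℝ} (hδ₂ : δ₂ ≠ 0) (hδ₂_one : 1 - δ₂ ≠ 0)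
    (ha₀ : a₀ * γ₂ * -δ₂ = (γ₂ - δ₁) * (δ₁ - δ₂))
    (ha₁ : a₁ * (γ₂ - 1) * (1 - δ₂) = (γ₂ - δ₁) * (δ₁ - δ₂)) :
    thresholdGap a₀ a₁ δ₁ γ₂ = (γ₂ - δ₁) * (-δ₁ * (1 - δ₁)) / (-δ₂ * (1 - δ₂)) := by
  rw [eq_div_iff (mul_ne_zero (neg_ne_zero.2 hδ₂) hδ₂_one), thresholdGap]
  linear_combination (-(1 - δ₁) * (1 - δ₂)) * ha₀ + δ₁ * δ₂ * ha₁

end Threshold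

section Discounting

variable {σ m r₀ r₁ ℓ : ℝ}

theorem discount_mul_posRoot_mul_neg_negRoot (hσ : 0 < σ) (hr₀ : 0 < r₀) (hℓ : 0 < ℓ) :
    ℓ / (r₀ + ℓ) * posRoot σ m (r₀ + ℓ) * -negRoot σ m (r₀ + ℓ) =
      (posRoot σ m (r₀ + ℓ) - negRoot σ m r₀) * (negRoot σ m r₀ - negRoot σ m (r₀ + ℓ)) := by
  have hprod := neg_mul_negRoot_mul_posRoot (m := m) (r := r₀ + ℓ) hσ.ne' (by positivity)
  have hdiff := mul_posRoot_sub_mul_sub_negRoot (m := m) (r := r₀) (s := r₀ + ℓ) hσ.ne'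
    (by positivity) (by positivity)
  have hcancel : ℓ / (r₀ + ℓ) * (r₀ + ℓ) = ℓ := div_mul_cancel₀ ℓ (by positivity)
  apply mul_left_cancel₀ hσ.ne'
  linear_combination ℓ / (r₀ + ℓ) * hprod - hdiff + hcancel

theorem discount_mul_posRoot_sub_one_mul_one_sub_negRoot (hσ : 0 < σ) (hr₀ : 0 < r₀)
    (hr₁ : 0 < r₁) (hℓ : 0 < ℓ) (hm : σ * (m - 1) = r₁ - r₀) :
    ℓ / (r₁ + ℓ) * (posRoot σ m (r₀ + ℓ) - 1) * (1 - negRoot σ m (r₀ + ℓ)) =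
      (posRoot σ m (r₀ + ℓ) - negRoot σ m r₀) * (negRoot σ m r₀ - negRoot σ m (r₀ + ℓ)) := by
  have hprod := mul_one_sub_negRoot_mul_posRoot_sub_one (m := m) (r := r₀ + ℓ) hσ.ne'
    (by positivity)
  have hdiff := mul_posRoot_sub_mul_sub_negRoot (m := m) (r := r₀) (s := r₀ + ℓ) hσ.ne'
    (by positivity) (by positivity)
  have hcancel : ℓ / (r₁ + ℓ) * (r₁ + ℓ) = ℓ := div_mul_cancel₀ ℓ (by positivity)
  apply mul_left_cancel₀ hσ.ne'
  linear_combination ℓ / (r₁ + ℓ) * (hprod + hm) - hdiff + hcancel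

theorem thresholdGap_pos (hσ : 0 < σ) (hr₀ : 0 < r₀) (hr₁ : 0 < r₁) (hℓ : 0 < ℓ)
    (hm : σ * (m - 1) = r₁ - r₀) :
    0 < thresholdGap (ℓ / (r₀ + ℓ)) (ℓ / (r₁ + ℓ)) (negRoot σ m r₀) (posRoot σ m (r₀ + ℓ)) := by
  have hδ₁ : negRoot σ m r₀ < 0 := negRoot_neg hσ hr₀
  have hδ₂ : negRoot σ m (r₀ + ℓ) < 0 := negRoot_neg hσ (by positivity)
  have hγ₂ : 0 < posRoot σ m (r₀ + ℓ) := posRoot_pos hσ (by positivity)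
  rw [thresholdGap_eq_of_mul_eq hδ₂.ne (by linarith)
    (discount_mul_posRoot_mul_neg_negRoot hσ hr₀ hℓ)
    (discount_mul_posRoot_sub_one_mul_one_sub_negRoot hσ hr₀ hr₁ hℓ hm)]
  exact div_pos (mul_pos (by linarith) (mul_pos (by linarith) (by linarith)))
    (mul_pos (by linarith) (by linarith))

end Discounting

theorem stmt_5 (μ1 μ2 ρ σ lam0 lam1 K βs βb η a0 a1 m δ1 δ3 γ2 k : ℝ)
    (hσ : 0 < σ) (hlam0 : 0 < lam0) (hlam1 : 0 < lam1)
    (hμ1 : μ1 < ρ) (hμ2 : μ2 < ρ)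
    (hm : m = 1 + (μ1 - μ2) / σ)
    (hK0 : 0 < K) (hK1 : K < 1) (hβs : βs = 1 - K) (hβb : βb = 1 + K)
    (hη : η = lam0 / lam1) (ha0 : a0 = lam0 / (ρ + lam0 - μ1)) (ha1 : a1 = lam0 / (ρ + lam0 - μ2))
    (hδ1 : δ1 = (m - Real.sqrt (m ^ 2 + 4 * (ρ - μ1) / σ)) / 2)
    (hδ3 : δ3 = (m - Real.sqrt (m ^ 2 + 4 * (ρ + lam0 + lam1 - μ1) / σ)) / 2)
    (hγ2 : γ2 = (m + Real.sqrt (m ^ 2 + 4 * (ρ + lam0 - μ1) / σ)) / 2)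
    (hk : k = (δ1 * δ3 * (1 + η) - (δ3 + η * δ1) * γ2 - a0 * (δ1 - δ3) * γ2) /
      ((1 + η) * (δ1 * δ3 + γ2) - (δ3 + η * δ1) * γ2 - (δ1 + η * δ3) - a1 * (γ2 - 1) * (δ1 - δ3)) *
      (βs / βb)) :
    k > -δ1 / (1 - δ1) * (βs / βb) := by
  have hr₀ : 0 < ρ - μ1 := sub_pos.2 hμ1
  have hr₁ : 0 < ρ - μ2 := sub_pos.2 hμ2
  have hm' : σ * (m - 1) = (ρ - μ2) - (ρ - μ1) := by rw [hm]; field_simp; ring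
  rw [add_sub_right_comm] at ha0 ha1 hγ2
  replace hδ1 : δ1 = negRoot σ m (ρ - μ1) := hδ1
  replace hδ3 : δ3 = negRoot σ m (ρ + lam0 + lam1 - μ1) := hδ3
  replace hγ2 : γ2 = posRoot σ m (ρ - μ1 + lam0) := hγ2
  have hδ1_neg : δ1 < 0 := hδ1 ▸ negRoot_neg hσ hr₀
  have hδ3_lt : δ3 < δ1 := by
    rw [hδ1, hδ3]
    exact negRoot_lt_negRoot hσ (by positivity) (by linarith)
  have hγ2_gt : 1 < γ2 := hγ2 ▸ one_lt_posRoot hσ (by linarith)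
  have hη_nonneg : 0 ≤ η := hη ▸ (div_pos hlam0 hlam1).le
  have ha1_le : a1 ≤ 1 := ha1 ▸ div_le_one_of_le₀ (by linarith) (by positivity)
  have hgap : 0 < thresholdGap a0 a1 δ1 γ2 := by
    rw [ha0, ha1, hδ1, hγ2]
    exact thresholdGap_pos hσ hr₀ hr₁ hlam0 hm'
  have hden := thresholdDen_pos hη_nonneg ha1_le hδ1_neg.le hδ3_lt.le hγ2_gt.le
  have hβ : 0 < βs / βb := by rw [hβs, hβb]; exact div_pos (by linarith) (by linarith)
  rw [hk]
  exact mul_lt_mul_of_pos_right (neg_div_one_sub_lt_thresholdNum_div_thresholdDen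
    (by linarith) hδ3_lt hden hgap) hβ
end

section
/- The threshold k satisfies the strict upper bound k < (−δ3/(1−δ3)) · (β_s/β_b). -/
/-!
Write `x = -δ1`, `y = -δ3` and `γ = γ2`. The threshold factors, up to `βs / βb`, as
`(y (γ + x) + η x (γ + y) - a0 γ (y - x)) /
  ((1 + y) (γ + x) + η (1 + x) (γ + y) - a1 (γ - 1) (y - x))`,
and its first terms alone have ratio `y / (1 + y)`. The second terms have the smaller ratio
`x / (1 + x)`, and the third ones lower the quotient further, because the quadratic equation
for `γ` turns `a1 (γ - 1)` into `λ0 γ / (ρ + λ0 - μ1 + σ γ) < a0 γ`. The denominator is positive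
because, `-x` and `γ` being roots of quadratics that differ by `λ0 / σ` in the constant term,
that same quantity is less than `γ + x` as soon as `δ1 < 1`.
-/

/-- The smaller root of the characteristic equation `z ^ 2 = m * z + q`, meaningful when
`0 ≤ m ^ 2 + 4 * q`. The exponents `δ1` and `δ3` are of this form. -/
noncomputable def lowerCharRoot (m q : ℝ) : ℝ := (m - √(m ^ 2 + 4 * q)) / 2

/-- The larger root of the characteristic equation `z ^ 2 = m * z + q`, meaningful when
`0 ≤ m ^ 2 + 4 * q`. The exponent `γ2` is of this form. -/
noncomputable def upperCharRoot (m q : ℝ) : ℝ := (m + √(m ^ 2 + 4 * q)) / 2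

section CharRoot

variable {m q r : ℝ}

theorem lowerCharRoot_sq (h : 0 ≤ m ^ 2 + 4 * q) :
    lowerCharRoot m q ^ 2 = m * lowerCharRoot m q + q := by
  unfold lowerCharRoot
  linear_combination Real.sq_sqrt h / 4

theorem upperCharRoot_sq (h : 0 ≤ m ^ 2 + 4 * q) :
    upperCharRoot m q ^ 2 = m * upperCharRoot m q + q := by
  unfold upperCharRoot
  linear_combination Real.sq_sqrt h / 4

theorem lowerCharRoot_neg (hq : 0 < q) : lowerCharRoot m q < 0 := by
  have hm : m < √(m ^ 2 + 4 * q) := Real.lt_sqrt_of_sq_lt (by linarith)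
  unfold lowerCharRoot
  linarith

theorem upperCharRoot_pos (hq : 0 < q) : 0 < upperCharRoot m q := by
  have hm : -m < √(m ^ 2 + 4 * q) := Real.lt_sqrt_of_sq_lt (by linarith [neg_sq m])
  unfold upperCharRoot
  linarith

theorem lowerCharRoot_lt_lowerCharRoot (h : 0 ≤ m ^ 2 + 4 * q) (hqr : q < r) :
    lowerCharRoot m r < lowerCharRoot m q := by
  have hsqrt : √(m ^ 2 + 4 * q) < √(m ^ 2 + 4 * r) := Real.sqrt_lt_sqrt h (by linarith)
  unfold lowerCharRoot
  linarith

theorem lowerCharRoot_lt_upperCharRoot (h : 0 < m ^ 2 + 4 * r) :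
    lowerCharRoot m q < upperCharRoot m r := by
  unfold lowerCharRoot upperCharRoot
  linarith [Real.sqrt_nonneg (m ^ 2 + 4 * q), Real.sqrt_pos.2 h]

end CharRoot

section CharEquation

variable {σ m A B γ δ l : ℝ}

theorem sub_one_div_eq_of_char_eq (hσ : σ ≠ 0) (hB : B ≠ 0) (hden : A + σ * γ ≠ 0)
    (hm : m = 1 + (B - A) / σ) (hγ : γ ^ 2 = m * γ + A / σ) :
    (γ - 1) / B = γ / (A + σ * γ) := by
  rw [div_eq_div_iff hB hden]
  rw [hm] at hγ
  field_simp at hγ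
  linear_combination hγ

theorem mul_div_lt_sub_of_char_eq (hσ : 0 < σ) (hA : 0 < A) (hγ0 : 0 < γ) (hδ1 : δ < 1)
    (hδγ : δ < γ) (hγ : γ ^ 2 = m * γ + A / σ) (hδ : δ ^ 2 = m * δ + (A - l) / σ) :
    l * γ / (A + σ * γ) < γ - δ := by
  have hA_eq : A = σ * (γ * (γ - m)) := by
    field_simp at hγ
    linear_combination -hγ
  have hl_eq : l = σ * ((γ - δ) * (γ + δ - m)) := by
    field_simp at hδ
    linear_combination hA_eq + hδ
  have hgap : 0 < σ * γ * (γ - δ) * (1 - δ) :=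
    mul_pos (mul_pos (mul_pos hσ hγ0) (sub_pos.2 hδγ)) (sub_pos.2 hδ1)
  rw [div_lt_iff₀ (by positivity)]
  linear_combination hgap + γ * hl_eq - (γ - δ) * hA_eq

end CharEquation

section ThresholdRatio

variable {δ ε γ η a b : ℝ}

theorem threshold_denom_pos (hεδ : ε < δ) (hδ1 : δ < 1) (hδγ : δ < γ) (hη : 0 ≤ η)
    (hb : b ≤ γ - δ) :
    0 < (1 - ε) * (γ - δ) + η * ((1 - δ) * (γ - ε)) - b * (δ - ε) := by
  have hη_term : 0 ≤ η * ((1 - δ) * (γ - ε)) :=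
    mul_nonneg hη (mul_nonneg (by linarith) (by linarith))
  calc 0 < (1 - δ) * (γ - δ) := mul_pos (sub_pos.2 hδ1) (sub_pos.2 hδγ)
    _ = (1 - ε) * (γ - δ) - (γ - δ) * (δ - ε) := by ring
    _ ≤ (1 - ε) * (γ - δ) - b * (δ - ε) :=
      sub_le_sub_left (mul_le_mul_of_nonneg_right hb (sub_pos.2 hεδ).le) _
    _ ≤ _ := by linarith

theorem threshold_ratio_lt (hεδ : ε < δ) (hε : ε ≤ 0) (hδ1 : δ < 1) (hδγ : δ < γ) (hη : 0 < η)
    (ha : 0 ≤ a) (hba : b ≤ a) (hb : b ≤ γ - δ) :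
    (-ε * (γ - δ) + η * (-δ * (γ - ε)) - a * (δ - ε)) /
      ((1 - ε) * (γ - δ) + η * ((1 - δ) * (γ - ε)) - b * (δ - ε)) < -ε / (1 - ε) := by
  have hgap : 0 < (δ - ε) * (η * (γ - ε) + a + -ε * (a - b)) := by
    have hη_term : 0 < η * (γ - ε) := mul_pos hη (by linarith)
    have hab_term : 0 ≤ -ε * (a - b) := mul_nonneg (neg_nonneg.2 hε) (sub_nonneg.2 hba)
    exact mul_pos (sub_pos.2 hεδ) (by linarith)
  rw [div_lt_div_iff₀ (threshold_denom_pos hεδ hδ1 hδγ hη.le hb) (by linarith)]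
  linear_combination hgap

end ThresholdRatio

theorem stmt_6_general (μ1 μ2 ρ σ lam0 lam1 K βs βb η a0 a1 m δ1 δ3 γ2 k : ℝ)
    (hσ : 0 < σ) (hlam0 : 0 < lam0) (hlam1 : 0 < lam1)
    (hμ1 : μ1 < ρ + lam0) (hμ2 : μ2 ≠ ρ + lam0)
    (hm : m = 1 + (μ1 - μ2) / σ)
    (hK : -1 < K) (hK1 : K < 1) (hβs : βs = 1 - K) (hβb : βb = 1 + K)
    (hη : η = lam0 / lam1) (ha0 : a0 = lam0 / (ρ + lam0 - μ1)) (ha1 : a1 = lam0 / (ρ + lam0 - μ2))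
    (hdisc : 0 ≤ m ^ 2 + 4 * ((ρ - μ1) / σ))
    (hδ1 : δ1 = lowerCharRoot m ((ρ - μ1) / σ)) (hδ1_lt : δ1 < 1)
    (hδ3 : δ3 = lowerCharRoot m ((ρ + lam0 + lam1 - μ1) / σ))
    (hγ2 : γ2 = upperCharRoot m ((ρ + lam0 - μ1) / σ))
    (hk : k = (δ1 * δ3 * (1 + η) - (δ3 + η * δ1) * γ2 - a0 * (δ1 - δ3) * γ2) /
      ((1 + η) * (δ1 * δ3 + γ2) - (δ3 + η * δ1) * γ2 - (δ1 + η * δ3) - a1 * (γ2 - 1) * (δ1 - δ3)) *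
      (βs / βb)) :
    k < -δ3 / (1 - δ3) * (βs / βb) := by
  have hβ : 0 < βs / βb := div_pos (by linarith) (by linarith)
  have hA : 0 < ρ + lam0 - μ1 := sub_pos.2 hμ1
  have hdiscγ : 0 < m ^ 2 + 4 * ((ρ + lam0 - μ1) / σ) := by positivity
  have hδ31 : δ3 < δ1 := hδ1 ▸ hδ3 ▸ lowerCharRoot_lt_lowerCharRoot hdisc (by gcongr; linarith)
  have hδ3_neg : δ3 < 0 := hδ3 ▸ lowerCharRoot_neg (div_pos (by linarith) hσ)
  have hδ1γ : δ1 < γ2 := hδ1 ▸ hγ2 ▸ lowerCharRoot_lt_upperCharRoot hdiscγ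
  have hγ_pos : 0 < γ2 := hγ2 ▸ upperCharRoot_pos (div_pos hA hσ)
  have hγ_sq : γ2 ^ 2 = m * γ2 + (ρ + lam0 - μ1) / σ := hγ2 ▸ upperCharRoot_sq hdiscγ.le
  have hδ1_sq : δ1 ^ 2 = m * δ1 + (ρ + lam0 - μ1 - lam0) / σ := by
    rw [hδ1, lowerCharRoot_sq hdisc]; ring
  have hb : a1 * (γ2 - 1) = lam0 * γ2 / (ρ + lam0 - μ1 + σ * γ2) := by
    rw [ha1, div_mul_eq_mul_div, mul_div_assoc, mul_div_assoc, sub_one_div_eq_of_char_eq hσ.ne'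
      (sub_ne_zero.2 hμ2.symm) (by positivity) (by rw [hm]; ring) hγ_sq]
  have hba : a1 * (γ2 - 1) ≤ a0 * γ2 := by
    rw [hb, ha0, div_mul_eq_mul_div]
    gcongr
    exact le_add_of_nonneg_right (by positivity)
  have hbγ : a1 * (γ2 - 1) < γ2 - δ1 :=
    hb ▸ mul_div_lt_sub_of_char_eq hσ hA hγ_pos hδ1_lt hδ1γ hγ_sq hδ1_sq
  have hratio := threshold_ratio_lt hδ31 hδ3_neg.le hδ1_lt hδ1γ (hη ▸ div_pos hlam0 hlam1)
    (ha0 ▸ by positivity) hba hbγ.le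
  rw [hk]
  refine mul_lt_mul_of_pos_right (Eq.trans_lt ?_ hratio) hβ
  congr 1 <;> ring

theorem stmt_6 (μ1 μ2 ρ σ lam0 lam1 K βs βb η a0 a1 m δ1 δ3 γ2 k : ℝ)
    (hσ : 0 < σ) (hlam0 : 0 < lam0) (hlam1 : 0 < lam1)
    (hμ1 : μ1 < ρ) (hμ2 : μ2 < ρ)
    (hm : m = 1 + (μ1 - μ2) / σ)
    (hK0 : 0 < K) (hK1 : K < 1) (hβs : βs = 1 - K) (hβb : βb = 1 + K)
    (hη : η = lam0 / lam1) (ha0 : a0 = lam0 / (ρ + lam0 - μ1)) (ha1 : a1 = lam0 / (ρ + lam0 - μ2))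
    (hδ1 : δ1 = (m - Real.sqrt (m ^ 2 + 4 * (ρ - μ1) / σ)) / 2)
    (hδ3 : δ3 = (m - Real.sqrt (m ^ 2 + 4 * (ρ + lam0 + lam1 - μ1) / σ)) / 2)
    (hγ2 : γ2 = (m + Real.sqrt (m ^ 2 + 4 * (ρ + lam0 - μ1) / σ)) / 2)
    (hk : k = (δ1 * δ3 * (1 + η) - (δ3 + η * δ1) * γ2 - a0 * (δ1 - δ3) * γ2) /
      ((1 + η) * (δ1 * δ3 + γ2) - (δ3 + η * δ1) * γ2 - (δ1 + η * δ3) - a1 * (γ2 - 1) * (δ1 - δ3)) *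
      (βs / βb)) :
    k < -δ3 / (1 - δ3) * (βs / βb) := by
  rw [mul_div_assoc] at hδ1 hδ3 hγ2
  have hq : 0 < (ρ - μ1) / σ := div_pos (sub_pos.2 hμ1) hσ
  exact stmt_6_general μ1 μ2 ρ σ lam0 lam1 K βs βb η a0 a1 m δ1 δ3 γ2 k hσ hlam0 hlam1
    (by linarith) (by linarith) hm (by linarith) hK1 hβs hβb hη ha0 ha1 (by positivity)
    hδ1 (hδ1.trans_lt ((lowerCharRoot_neg hq).trans one_pos)) hδ3 hγ2 hk
end

section
/- With B2 = (1+(μ1−μ2)/σ)² + 4(ρ−μ1)/σ and B3 = (1+(μ1−μ2)/σ)² + 4(ρ+λ0+λ1−μ1)/σ, the strict inequality (λ0+λ1) · (1 + (μ2−μ1)/σ + √B2) > (ρ−μ2) · (√B3 − √B2) holds. -/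
/-!
With `c = 1 + (μ2 - μ1) / σ` one has `B2 = c ^ 2 + 4 * (ρ - μ2) / σ`, hence `-c < √B2 < √B3`.
The inequality compares the slopes of the two adjacent chords of the parabola `x ↦ x ^ 2` with
endpoints over these three points, so it is an instance of strict convexity.
-/

theorem sub_sq_mul_sqrt_sub_sqrt_lt {x D E : ℝ} (hx : x < √D) (hD : 0 ≤ D) (hDE : D < E) :
    (D - x ^ 2) * (√E - √D) < (E - D) * (√D - x) := by
  have hsqrt : √D < √E := Real.sqrt_lt_sqrt hD hDE
  have hslope : (√D ^ 2 - x ^ 2) / (√D - x) < (√E ^ 2 - √D ^ 2) / (√E - √D) :=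
    (even_two.strictConvexOn_pow two_ne_zero).slope_strict_mono_adjacent
      (Set.mem_univ x) (Set.mem_univ √E) hx hsqrt
  rwa [Real.sq_sqrt hD, Real.sq_sqrt (hD.trans hDE.le),
    div_lt_div_iff₀ (sub_pos.mpr hx) (sub_pos.mpr hsqrt)] at hslope

theorem stmt_10_general (μ1 μ2 ρ σ lam0 lam1 B2 B3 : ℝ)
    (hσ : 0 < σ) (hlam : 0 < lam0 + lam1) (hμ2 : μ2 < ρ)
    (hB2 : B2 = (1 + (μ1 - μ2) / σ) ^ 2 + 4 * (ρ - μ1) / σ)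
    (hB3 : B3 = (1 + (μ1 - μ2) / σ) ^ 2 + 4 * (ρ + lam0 + lam1 - μ1) / σ) :
    (lam0 + lam1) * (1 + (μ2 - μ1) / σ + √B2) > (ρ - μ2) * (√B3 - √B2) := by
  have hscale : 0 < 4 / σ := by positivity
  have hB2_sub_sq : B2 - (-(1 + (μ2 - μ1) / σ)) ^ 2 = 4 / σ * (ρ - μ2) := by
    rw [hB2]; field_simp; ring
  have hB3_sub_B2 : B3 - B2 = 4 / σ * (lam0 + lam1) := by
    rw [hB3, hB2]; ring
  have hsq_lt : (-(1 + (μ2 - μ1) / σ)) ^ 2 < B2 :=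
    sub_pos.mp (hB2_sub_sq ▸ mul_pos hscale (sub_pos.mpr hμ2))
  have hB2_lt_B3 : B2 < B3 := sub_pos.mp (hB3_sub_B2 ▸ mul_pos hscale hlam)
  have hchord := sub_sq_mul_sqrt_sub_sqrt_lt (Real.lt_sqrt_of_sq_lt hsq_lt)
    ((sq_nonneg _).trans hsq_lt.le) hB2_lt_B3
  rwa [hB2_sub_sq, hB3_sub_B2, mul_assoc, mul_assoc, mul_lt_mul_iff_right₀ hscale,
    sub_neg_eq_add, add_comm (√B2)] at hchord

theorem stmt_10 (μ1 μ2 ρ σ lam0 lam1 B2 B3 : ℝ)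
    (hσ : 0 < σ) (hlam0 : 0 < lam0) (hlam1 : 0 < lam1)
    (hμ1 : μ1 < ρ) (hμ2 : μ2 < ρ)
    (hB2 : B2 = (1 + (μ1 - μ2) / σ) ^ 2 + 4 * (ρ - μ1) / σ)
    (hB3 : B3 = (1 + (μ1 - μ2) / σ) ^ 2 + 4 * (ρ + lam0 + lam1 - μ1) / σ) :
    (lam0 + lam1) * (1 + (μ2 - μ1) / σ + Real.sqrt B2) >
      (ρ - μ2) * (Real.sqrt B3 - Real.sqrt B2) :=
  stmt_10_general μ1 μ2 ρ σ lam0 lam1 B2 B3 hσ (add_pos hlam0 hlam1) hμ2 hB2 hB3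
end

section
/- For any real constants C1 and C3, with η = λ0/λ1, the functions w0(y) = C1 y^{δ1} − η C3 y^{δ3} and w1(y) = C1 y^{δ1} + C3 y^{δ3} satisfy, for all y in (0,∞), the coupled system (ρ+λ1) w1(y) − L w1(y) = λ1 w0(y) and (ρ+λ0) w0(y) − L w0(y) = λ0 w1(y), where L f(y) = σ y² f''(y) + (μ2−μ1) y f'(y) + μ1 f(y). -/
/-!
Both components are combinations of powers of `y`, and a power `y ^ δ` is an eigenfunction of the
Euler operator `L`, with eigenvalue the value of the indicial polynomial at `δ`. The exponents `δ1`
and `δ3` are chosen so that these eigenvalues are `ρ` and `ρ + λ0 + λ1`. In vector form the system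
reads `L w = ρ w + Q w` with `Q = !![λ0, -λ0; -λ1, λ1]`, and the coefficient vectors `(1, 1)` and
`(-η, 1)` of the two powers are eigenvectors of `Q` for the eigenvalues `0` and `λ0 + λ1`.
-/

open Filter Topology

section EulerOperator

variable {𝕜 : Type*} [NontriviallyNormedField 𝕜] {a b c A y : 𝕜} {f g : 𝕜 → 𝕜}

/-- The second-order Euler (equidimensional) differential operator
`f ↦ a y² f'' + b y f' + c f`, evaluated at `y`. -/
noncomputable def eulerOp (a b c : 𝕜) (f : 𝕜 → 𝕜) (y : 𝕜) : 𝕜 :=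
  a * y ^ 2 * deriv (deriv f) y + b * y * deriv f y + c * f y

theorem eulerOp_congr (h : f =ᶠ[𝓝 y] g) : eulerOp a b c f y = eulerOp a b c g y := by
  simp only [eulerOp, h.deriv.deriv_eq, h.deriv_eq, h.eq_of_nhds]

theorem eulerOp_const_mul : eulerOp a b c (fun x ↦ A * f x) y = A * eulerOp a b c f y := by
  simp only [eulerOp, deriv_const_mul_field']
  ring

theorem eulerOp_add (hf : ContDiffAt 𝕜 2 f y) (hg : ContDiffAt 𝕜 2 g y) :
    eulerOp a b c (fun x ↦ f x + g x) y = eulerOp a b c f y + eulerOp a b c g y := by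
  have deriv_add : deriv (fun x ↦ f x + g x) y = deriv f y + deriv g y :=
    deriv_fun_add (hf.differentiableAt two_ne_zero) (hg.differentiableAt two_ne_zero)
  have deriv_deriv_add :
      deriv (deriv fun x ↦ f x + g x) y = deriv (deriv f) y + deriv (deriv g) y := by
    simpa only [iteratedDeriv_succ, iteratedDeriv_zero] using iteratedDeriv_fun_add hf hg
  simp only [eulerOp, deriv_add, deriv_deriv_add]
  ring

end EulerOperator

/-- The indicial polynomial of `eulerOp a b c`: its eigenvalue on the power `y ^ δ`. -/
def indicialPoly {R : Type*} [CommRing R] (a b c δ : R) : R :=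
  a * δ * (δ - 1) + b * δ + c

theorem indicialPoly_eq_iff {a b c r δ : ℝ} (ha : a ≠ 0)
    (hdisc : 0 ≤ (1 - b / a) ^ 2 + 4 * (r - c) / a) :
    indicialPoly a b c δ = r ↔
      δ = (1 - b / a + √((1 - b / a) ^ 2 + 4 * (r - c) / a)) / 2 ∨
        δ = (1 - b / a - √((1 - b / a) ^ 2 + 4 * (r - c) / a)) / 2 := by
  set s := √((1 - b / a) ^ 2 + 4 * (r - c) / a)
  have discrim_eq : discrim 1 (-(1 - b / a)) (-((r - c) / a)) = s * s := by
    rw [Real.mul_self_sqrt hdisc, discrim]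
    ring
  have sub_eq_mul_monic :
      indicialPoly a b c δ - r = a * (1 * (δ * δ) + -(1 - b / a) * δ + -((r - c) / a)) := by
    rw [indicialPoly]
    field_simp
    ring
  rw [← sub_eq_zero, sub_eq_mul_monic, mul_eq_zero, or_iff_right ha,
    quadratic_eq_zero_iff one_ne_zero discrim_eq, neg_neg, mul_one]

theorem eulerOp_rpow {a b c δ y : ℝ} (hy : y ≠ 0) :
    eulerOp a b c (fun x ↦ x ^ δ) y = indicialPoly a b c δ * y ^ δ := by
  simp only [eulerOp, Real.deriv_rpow_const', deriv_const_mul_field', Real.rpow_sub_one hy,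
    indicialPoly]
  field_simp

theorem eulerOp_rpow_add_rpow {a b c A B d e y : ℝ} {w : ℝ → ℝ} (hy : y ≠ 0)
    (hw : w =ᶠ[𝓝 y] fun x ↦ A * x ^ d + B * x ^ e) :
    eulerOp a b c w y =
      A * (indicialPoly a b c d * y ^ d) + B * (indicialPoly a b c e * y ^ e) := by
  have contDiffAt_mul_rpow (D p : ℝ) : ContDiffAt ℝ 2 (fun x ↦ D * x ^ p) y :=
    contDiffAt_const.mul (Real.contDiffAt_rpow_const_of_ne hy)
  rw [eulerOp_congr hw, eulerOp_add (contDiffAt_mul_rpow A d) (contDiffAt_mul_rpow B e),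
    eulerOp_const_mul, eulerOp_const_mul, eulerOp_rpow hy, eulerOp_rpow hy]

theorem stmt_12_general {μ1 μ2 ρ σ lam0 lam1 η δ1 δ3 C1 C3 : ℝ} {w0 w1 : ℝ → ℝ}
    (hη : η * lam1 = lam0)
    (hδ1 : indicialPoly σ (μ2 - μ1) μ1 δ1 = ρ)
    (hδ3 : indicialPoly σ (μ2 - μ1) μ1 δ3 = ρ + lam0 + lam1)
    (hw0 : ∀ y, 0 < y → w0 y = C1 * y ^ δ1 - η * C3 * y ^ δ3)
    (hw1 : ∀ y, 0 < y → w1 y = C1 * y ^ δ1 + C3 * y ^ δ3) :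
    ∀ y, 0 < y →
      (ρ + lam1) * w1 y - eulerOp σ (μ2 - μ1) μ1 w1 y = lam1 * w0 y ∧
      (ρ + lam0) * w0 y - eulerOp σ (μ2 - μ1) μ1 w0 y = lam0 * w1 y := by
  intro y hy
  have w1_eq : w1 =ᶠ[𝓝 y] fun x ↦ C1 * x ^ δ1 + C3 * x ^ δ3 := by
    filter_upwards [lt_mem_nhds hy] with x hx using hw1 x hx
  have w0_eq : w0 =ᶠ[𝓝 y] fun x ↦ C1 * x ^ δ1 + -(η * C3) * x ^ δ3 := by
    filter_upwards [lt_mem_nhds hy] with x hx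
    rw [hw0 x hx, neg_mul, sub_eq_add_neg]
  rw [eulerOp_rpow_add_rpow hy.ne' w1_eq, eulerOp_rpow_add_rpow hy.ne' w0_eq, hδ1, hδ3,
    hw0 y hy, hw1 y hy]
  subst hη
  constructor <;> ring

theorem stmt_12 (μ1 μ2 ρ σ lam0 lam1 η m δ1 δ3 C1 C3 : ℝ) (w0 w1 : ℝ → ℝ)
    (hσ : 0 < σ) (hlam0 : 0 < lam0) (hlam1 : 0 < lam1) (hμ1 : μ1 < ρ)
    (hm : m = 1 + (μ1 - μ2) / σ)
    (hη : η = lam0 / lam1)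
    (hδ1 : δ1 = (m - Real.sqrt (m ^ 2 + 4 * (ρ - μ1) / σ)) / 2)
    (hδ3 : δ3 = (m - Real.sqrt (m ^ 2 + 4 * (ρ + lam0 + lam1 - μ1) / σ)) / 2)
    (hw0 : ∀ y : ℝ, w0 y = C1 * y ^ δ1 - η * C3 * y ^ δ3)
    (hw1 : ∀ y : ℝ, w1 y = C1 * y ^ δ1 + C3 * y ^ δ3) :
    ∀ y : ℝ, 0 < y →
      (ρ + lam1) * w1 y -
          (σ * y ^ 2 * deriv (deriv w1) y + (μ2 - μ1) * y * deriv w1 y + μ1 * w1 y) =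
        lam1 * w0 y ∧
      (ρ + lam0) * w0 y -
          (σ * y ^ 2 * deriv (deriv w0) y + (μ2 - μ1) * y * deriv w0 y + μ1 * w0 y) =
        lam0 * w1 y := by
  have m_eq : m = 1 - (μ2 - μ1) / σ := by rw [hm]; ring
  have gap_pos : 0 < ρ - μ1 := sub_pos.2 hμ1
  have shifted_gap_pos : 0 < ρ + lam0 + lam1 - μ1 := by linarith
  rw [m_eq] at hδ1 hδ3
  exact stmt_12_general (by rw [hη, div_mul_cancel₀ _ hlam1.ne'])
    ((indicialPoly_eq_iff hσ.ne' (by positivity)).2 (Or.inr hδ1))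
    ((indicialPoly_eq_iff hσ.ne' (by positivity)).2 (Or.inr hδ3))
    (fun y _ ↦ hw0 y) (fun y _ ↦ hw1 y)
end

section
/- (Theorem 4.1, solution of the HJB equations) Define w0(y) = C2 y^{γ2} + a0 β_s − a1 β_b y for 0 < y < k and w0(y) = C1 y^{δ1} − η C3 y^{δ3} for y ≥ k, and w1(y) = β_s − β_b y for 0 < y < k and w1(y) = C1 y^{δ1} + C3 y^{δ3} for y ≥ k. Then with L f(y) = σ y² f''(y) + (μ2−μ1) y f'(y) + μ1 f(y): for all y in (0,k), (ρ+λ0) w0(y) − L w0(y) = λ0 w1(y) and (ρ+λ1) w1(y) − L w1(y) ≥ λ1 w0(y) and w1(y) = β_s − β_b y; and for all y in (k,∞), (ρ+λ0) w0(y) − L w0(y) = λ0 w1(y), (ρ+λ1) w1(y) − L w1(y) = λ1 w0(y), and w1(y) ≥ β_s − β_b y. -/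
/-! The operator `σ y² f'' + (μ2 - μ1) y f' + μ1 f` acts on `y ^ s` as multiplication by a
quadratic polynomial in `s` with values `μ1` at `0` and `μ2` at `1`, so every differential equation
is an identity between values of this polynomial.  If `γ1` denotes the companion of the root `γ2`,
then `δ3 < γ1 < δ1 < 0` and `1 < γ2`, all parameters factor through differences of these four roots,
and with `φ s = s / (s - 1)` the free boundary is given by `β_b k / β_s = φ δ1 φ δ3 / φ γ1`.  It
follows that `C1`, `C2`, `C3` are positive.  Above `k`, the value `w1` is convex and touches the
payoff tangentially at `k`, so it dominates the payoff.  Below `k`, the surplus in the stopping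
inequality is decreasing, and smooth fit identifies its value at `k` with `σ k² w1''(k+) > 0`. -/

open Filter Finset Topology

section CauchyEuler

/-- The Cauchy-Euler operator with leading coefficient `σ`, parametrised by its eigenvalues `μ1` and
`μ2` on the functions `1` and `y`. -/
noncomputable def eulerOperator (σ μ1 μ2 : ℝ) (f : ℝ → ℝ) (y : ℝ) : ℝ :=
  σ * y ^ 2 * deriv (deriv f) y + (μ2 - μ1) * y * deriv f y + μ1 * f y

/-- The indicial polynomial of `eulerOperator σ μ1 μ2`: its value at `s` is the eigenvalue of the
operator on `y ^ s`. -/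
def indicial (σ μ1 μ2 s : ℝ) : ℝ :=
  σ * (s * (s - 1)) + (μ2 - μ1) * s + μ1

theorem hasDerivAt_sum_mul_rpow {ι : Type*} (t : Finset ι) (A e : ι → ℝ) {y : ℝ} (hy : y ≠ 0) :
    HasDerivAt (fun z ↦ ∑ i ∈ t, A i * z ^ e i) (∑ i ∈ t, A i * e i * y ^ (e i - 1)) y := by
  refine HasDerivAt.fun_sum fun i _ ↦ ?_
  simpa only [mul_assoc] using (Real.hasDerivAt_rpow_const (Or.inl hy)).const_mul (A i)

theorem eulerOperator_eq_sum {ι : Type*} (σ μ1 μ2 : ℝ) {f : ℝ → ℝ} {t : Finset ι} {A e : ι → ℝ}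
    {y : ℝ} (hy : y ≠ 0) (hf : f =ᶠ[𝓝 y] fun z ↦ ∑ i ∈ t, A i * z ^ e i) :
    eulerOperator σ μ1 μ2 f y = ∑ i ∈ t, indicial σ μ1 μ2 (e i) * (A i * y ^ e i) := by
  have hf' : deriv f =ᶠ[𝓝 y] fun z ↦ ∑ i ∈ t, A i * e i * z ^ (e i - 1) := by
    filter_upwards [hf.eventually_nhds, isOpen_ne.mem_nhds hy] with z hz hz0
    rw [EventuallyEq.deriv_eq hz, (hasDerivAt_sum_mul_rpow t A e hz0).deriv]
  have hf'' : deriv (deriv f) y = ∑ i ∈ t, A i * e i * (e i - 1) * y ^ (e i - 1 - 1) := by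
    rw [hf'.deriv_eq, (hasDerivAt_sum_mul_rpow t _ _ hy).deriv]
  rw [eulerOperator, hf'', hf'.eq_of_nhds, hf.eq_of_nhds]
  simp only [mul_sum, ← sum_add_distrib, Real.rpow_sub_one hy]
  refine sum_congr rfl fun i _ ↦ ?_
  rw [indicial]
  field_simp

end CauchyEuler

section IndicialRoots

variable {σ μ1 μ2 c d : ℝ}

/-- The smaller solution `s` of `indicial σ μ1 μ2 s = c`, meaningful when `0 < σ` and `μ1 ≤ c`. -/
noncomputable def smallRoot (σ μ1 μ2 c : ℝ) : ℝ :=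
  (1 + (μ1 - μ2) / σ - √((1 + (μ1 - μ2) / σ) ^ 2 + 4 * (c - μ1) / σ)) / 2

/-- The larger solution `s` of `indicial σ μ1 μ2 s = c`, meaningful when `0 < σ` and `μ1 ≤ c`. -/
noncomputable def largeRoot (σ μ1 μ2 c : ℝ) : ℝ :=
  (1 + (μ1 - μ2) / σ + √((1 + (μ1 - μ2) / σ) ^ 2 + 4 * (c - μ1) / σ)) / 2

theorem indicial_zero (σ μ1 μ2 : ℝ) : indicial σ μ1 μ2 0 = μ1 := by
  simp [indicial]

theorem indicial_one (σ μ1 μ2 : ℝ) : indicial σ μ1 μ2 1 = μ2 := by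
  simp [indicial]

theorem indicial_eq_sub_mul_roots (hσ : 0 < σ) (hc : μ1 ≤ c) (s : ℝ) :
    indicial σ μ1 μ2 s =
      c - σ * ((s - smallRoot σ μ1 μ2 c) * (largeRoot σ μ1 μ2 c - s)) := by
  have hsq : √((1 + (μ1 - μ2) / σ) ^ 2 + 4 * (c - μ1) / σ) ^ 2 =
      (1 + (μ1 - μ2) / σ) ^ 2 + 4 * (c - μ1) / σ :=
    Real.sq_sqrt (add_nonneg (sq_nonneg _) (div_nonneg (by linarith) hσ.le))
  have hm : σ * (1 + (μ1 - μ2) / σ) = σ + μ1 - μ2 := by field_simp; ring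
  have hd : σ * (4 * (c - μ1) / σ) = 4 * (c - μ1) := by field_simp
  rw [indicial, smallRoot, largeRoot]
  linear_combination σ / 4 * hsq + s * hm + 1 / 4 * hd

theorem indicial_smallRoot (hσ : 0 < σ) (hc : μ1 ≤ c) :
    indicial σ μ1 μ2 (smallRoot σ μ1 μ2 c) = c := by
  simp [indicial_eq_sub_mul_roots hσ hc]

theorem indicial_largeRoot (hσ : 0 < σ) (hc : μ1 ≤ c) :
    indicial σ μ1 μ2 (largeRoot σ μ1 μ2 c) = c := by
  simp [indicial_eq_sub_mul_roots hσ hc]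

theorem smallRoot_neg (hσ : 0 < σ) (hc : μ1 < c) : smallRoot σ μ1 μ2 c < 0 := by
  have : 1 + (μ1 - μ2) / σ < √((1 + (μ1 - μ2) / σ) ^ 2 + 4 * (c - μ1) / σ) :=
    Real.lt_sqrt_of_sq_lt (lt_add_of_pos_right _ (div_pos (by linarith) hσ))
  rw [smallRoot]
  linarith

theorem smallRoot_lt_smallRoot (hσ : 0 < σ) (hc : μ1 ≤ c) (hcd : c < d) :
    smallRoot σ μ1 μ2 d < smallRoot σ μ1 μ2 c := by
  rw [smallRoot, smallRoot]
  have : 0 ≤ (1 + (μ1 - μ2) / σ) ^ 2 + 4 * (c - μ1) / σ :=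
    add_nonneg (sq_nonneg _) (div_nonneg (by linarith) hσ.le)
  gcongr

theorem one_lt_largeRoot (hσ : 0 < σ) (hc1 : μ1 < c) (hc2 : μ2 < c) :
    1 < largeRoot σ μ1 μ2 c := by
  have hfactor := indicial_eq_sub_mul_roots (μ2 := μ2) hσ hc1.le 1
  rw [indicial_one] at hfactor
  have hsmall : 0 < 1 - smallRoot σ μ1 μ2 c := by linarith [smallRoot_neg (μ2 := μ2) hσ hc1]
  have hprod : 0 < σ * (1 - smallRoot σ μ1 μ2 c) * (largeRoot σ μ1 μ2 c - 1) := by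
    linarith
  linarith [pos_of_mul_pos_right hprod (by positivity)]

end IndicialRoots

theorem one_add_mul_sub_one_le_rpow {t p : ℝ} (ht : 0 < t) (hp : p ≤ 0) :
    1 + p * (t - 1) ≤ t ^ p := by
  calc 1 + p * (t - 1) ≤ p * Real.log t + 1 := by
        linarith [mul_le_mul_of_nonpos_left (Real.log_le_sub_one_of_pos ht) hp]
    _ ≤ Real.exp (p * Real.log t) := Real.add_one_le_exp _
    _ = t ^ p := by rw [Real.rpow_def_of_pos ht, mul_comm]

theorem rpow_mul_one_add_le_rpow {x y p : ℝ} (hx : 0 < x) (hy : 0 < y) (hp : p ≤ 0) :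
    x ^ p * (1 + p * (y / x - 1)) ≤ y ^ p := by
  calc x ^ p * (1 + p * (y / x - 1)) ≤ x ^ p * (y / x) ^ p := by
        gcongr
        exact one_add_mul_sub_one_le_rpow (by positivity) hp
    _ = y ^ p := by rw [← Real.mul_rpow hx.le (by positivity), mul_div_cancel₀ _ hx.ne']

/-- Two assets with drifts `μ1`, `μ2`, discount rate `ρ` and squared relative volatility `2 * σ`,
together with a two-state chain leaving states `0` and `1` at rates `lam0` and `lam1`.  In state
`1` one may stop and collect `βs x₁ - βb x₂`.  The factors `βs` and `βb` are independent; a single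
proportional cost `K` corresponds to `βs = 1 - K`, `βb = 1 + K`. -/
structure SwitchingMarket where
  (μ1 μ2 ρ σ lam0 lam1 βs βb : ℝ)
  σ_pos : 0 < σ
  lam0_pos : 0 < lam0
  lam1_pos : 0 < lam1
  μ1_lt_ρ : μ1 < ρ
  μ2_lt_ρ : μ2 < ρ
  βs_pos : 0 < βs
  βb_pos : 0 < βb

namespace SwitchingMarket

variable (M : SwitchingMarket)

/-- The operator `L` of the HJB equations, in the price ratio `y = x₂ / x₁`. -/
noncomputable def generator : (ℝ → ℝ) → ℝ → ℝ :=
  eulerOperator M.σ M.μ1 M.μ2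

/-- The eigenvalue of the generator on `y ^ s`. -/
def symbol (s : ℝ) : ℝ :=
  indicial M.σ M.μ1 M.μ2 s

/-- The ratio `η` of the switching rates. -/
noncomputable def η : ℝ := M.lam0 / M.lam1

/-- The coefficient `a0` of the constant part of `w0` below the free boundary. -/
noncomputable def a0 : ℝ := M.lam0 / (M.ρ + M.lam0 - M.μ1)

/-- The coefficient `a1` of the linear part of `w0` below the free boundary. -/
noncomputable def a1 : ℝ := M.lam0 / (M.ρ + M.lam0 - M.μ2)

/-- The decay exponent `δ1` of the mode common to both states above the free boundary. -/
noncomputable def δ1 : ℝ := smallRoot M.σ M.μ1 M.μ2 M.ρ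

/-- The decay exponent `δ3` of the mode above the free boundary in which `w0` is `-η` times `w1`. -/
noncomputable def δ3 : ℝ := smallRoot M.σ M.μ1 M.μ2 (M.ρ + M.lam0 + M.lam1)

/-- The growth exponent `γ2` of `w0` below the free boundary. -/
noncomputable def γ2 : ℝ := largeRoot M.σ M.μ1 M.μ2 (M.ρ + M.lam0)

/-- The negative companion of `γ2`; it is absent from the closed formulas, but they all factor
through it. -/
noncomputable def γ1 : ℝ := smallRoot M.σ M.μ1 M.μ2 (M.ρ + M.lam0)

/-- The free boundary `k`. -/
noncomputable def k : ℝ :=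
  (M.δ1 * M.δ3 * (1 + M.η) - (M.δ3 + M.η * M.δ1) * M.γ2 - M.a0 * (M.δ1 - M.δ3) * M.γ2) /
    ((1 + M.η) * (M.δ1 * M.δ3 + M.γ2) - (M.δ3 + M.η * M.δ1) * M.γ2 - (M.δ1 + M.η * M.δ3) -
      M.a1 * (M.γ2 - 1) * (M.δ1 - M.δ3)) * (M.βs / M.βb)

/-- The coefficient `C1` of `y ^ δ1` in both value functions above the free boundary. -/
noncomputable def C1 : ℝ :=
  (-M.δ3 * M.βs + (M.δ3 - 1) * M.βb * M.k) / ((M.δ1 - M.δ3) * M.k ^ M.δ1)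

/-- The coefficient `C3` of `y ^ δ3` in `w1` above the free boundary. -/
noncomputable def C3 : ℝ :=
  (M.δ1 * M.βs - (M.δ1 - 1) * M.βb * M.k) / ((M.δ1 - M.δ3) * M.k ^ M.δ3)

/-- The coefficient `C2` of `y ^ γ2` in `w0` below the free boundary. -/
noncomputable def C2 : ℝ :=
  ((1 - M.a0) * (M.η + M.a1) * (1 - M.δ1) * (-M.δ3) +
      (1 - M.a1) * (M.η + M.a0) * (1 - M.δ3) * M.δ1) * M.βs /
    (((1 + M.η) * (M.δ1 * M.δ3 + M.γ2) - M.δ1 * ((M.a1 + M.η) * M.γ2 + (1 - M.a1)) -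
      M.δ3 * ((M.a1 + M.η) + M.γ2 * (1 - M.a1))) * M.k ^ M.γ2)

/-- The candidate value function in state `0`. -/
noncomputable def w0 (y : ℝ) : ℝ :=
  if y < M.k then M.C2 * y ^ M.γ2 + M.a0 * M.βs - M.a1 * M.βb * y
  else M.C1 * y ^ M.δ1 - M.η * M.C3 * y ^ M.δ3

/-- The candidate value function in state `1`. -/
noncomputable def w1 (y : ℝ) : ℝ :=
  if y < M.k then M.βs - M.βb * y else M.C1 * y ^ M.δ1 + M.C3 * y ^ M.δ3

section Roots

theorem δ1_neg : M.δ1 < 0 :=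
  smallRoot_neg M.σ_pos M.μ1_lt_ρ

theorem γ1_lt_δ1 : M.γ1 < M.δ1 :=
  smallRoot_lt_smallRoot M.σ_pos M.μ1_lt_ρ.le (by linarith [M.lam0_pos])

theorem δ3_lt_γ1 : M.δ3 < M.γ1 :=
  smallRoot_lt_smallRoot M.σ_pos (by linarith [M.lam0_pos, M.μ1_lt_ρ]) (by linarith [M.lam1_pos])

theorem one_lt_γ2 : 1 < M.γ2 :=
  one_lt_largeRoot M.σ_pos (by linarith [M.lam0_pos, M.μ1_lt_ρ])
    (by linarith [M.lam0_pos, M.μ2_lt_ρ])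

theorem γ1_neg : M.γ1 < 0 :=
  M.γ1_lt_δ1.trans M.δ1_neg

theorem δ3_neg : M.δ3 < 0 :=
  M.δ3_lt_γ1.trans M.γ1_neg

theorem γ2_pos : 0 < M.γ2 :=
  one_pos.trans M.one_lt_γ2

theorem γ2_sub_one_pos : 0 < M.γ2 - 1 :=
  sub_pos.2 M.one_lt_γ2

theorem one_sub_δ1_pos : 0 < 1 - M.δ1 := by
  linarith [M.δ1_neg]

theorem one_sub_δ3_pos : 0 < 1 - M.δ3 := by
  linarith [M.δ3_neg]

theorem one_sub_γ1_pos : 0 < 1 - M.γ1 := by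
  linarith [M.γ1_neg]

theorem δ1_sub_γ1_pos : 0 < M.δ1 - M.γ1 :=
  sub_pos.2 M.γ1_lt_δ1

theorem γ1_sub_δ3_pos : 0 < M.γ1 - M.δ3 :=
  sub_pos.2 M.δ3_lt_γ1

theorem δ1_sub_δ3_pos : 0 < M.δ1 - M.δ3 :=
  sub_pos.2 (M.δ3_lt_γ1.trans M.γ1_lt_δ1)

theorem γ2_sub_δ1_pos : 0 < M.γ2 - M.δ1 := by
  linarith [M.γ2_pos, M.δ1_neg]

theorem γ2_sub_δ3_pos : 0 < M.γ2 - M.δ3 := by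
  linarith [M.γ2_pos, M.δ3_neg]

theorem symbol_zero : M.symbol 0 = M.μ1 :=
  indicial_zero ..

theorem symbol_one : M.symbol 1 = M.μ2 :=
  indicial_one ..

theorem symbol_δ1 : M.symbol M.δ1 = M.ρ :=
  indicial_smallRoot M.σ_pos M.μ1_lt_ρ.le

theorem symbol_δ3 : M.symbol M.δ3 = M.ρ + M.lam0 + M.lam1 :=
  indicial_smallRoot M.σ_pos (by linarith [M.lam0_pos, M.lam1_pos, M.μ1_lt_ρ])

theorem symbol_γ2 : M.symbol M.γ2 = M.ρ + M.lam0 :=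
  indicial_largeRoot M.σ_pos (by linarith [M.lam0_pos, M.μ1_lt_ρ])

theorem symbol_eq_sub_mul (s : ℝ) :
    M.symbol s = M.ρ + M.lam0 - M.σ * ((s - M.γ1) * (M.γ2 - s)) :=
  indicial_eq_sub_mul_roots M.σ_pos (by linarith [M.lam0_pos, M.μ1_lt_ρ]) s

theorem lam0_eq : M.lam0 = M.σ * ((M.δ1 - M.γ1) * (M.γ2 - M.δ1)) := by
  linear_combination M.symbol_δ1 - M.symbol_eq_sub_mul M.δ1

theorem lam1_eq : M.lam1 = M.σ * ((M.γ1 - M.δ3) * (M.γ2 - M.δ3)) := by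
  linear_combination M.symbol_eq_sub_mul M.δ3 - M.symbol_δ3

theorem η_eq :
    M.η = (M.δ1 - M.γ1) * (M.γ2 - M.δ1) / ((M.γ1 - M.δ3) * (M.γ2 - M.δ3)) := by
  rw [η, lam0_eq, lam1_eq, mul_div_mul_left _ _ M.σ_pos.ne']

theorem a0_eq : M.a0 = (M.δ1 - M.γ1) * (M.γ2 - M.δ1) / (-M.γ1 * M.γ2) := by
  have h : M.ρ + M.lam0 - M.μ1 = M.σ * (-M.γ1 * M.γ2) := by
    linear_combination M.symbol_zero - M.symbol_eq_sub_mul 0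
  rw [a0, h, lam0_eq, mul_div_mul_left _ _ M.σ_pos.ne']

theorem a1_eq : M.a1 = (M.δ1 - M.γ1) * (M.γ2 - M.δ1) / ((1 - M.γ1) * (M.γ2 - 1)) := by
  have h : M.ρ + M.lam0 - M.μ2 = M.σ * ((1 - M.γ1) * (M.γ2 - 1)) := by
    linear_combination M.symbol_one - M.symbol_eq_sub_mul 1
  rw [a1, h, lam0_eq, mul_div_mul_left _ _ M.σ_pos.ne']

theorem lam1_mul_η : M.lam1 * M.η = M.lam0 :=
  mul_div_cancel₀ _ M.lam1_pos.ne'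

theorem a0_mul : M.a0 * (M.ρ + M.lam0 - M.μ1) = M.lam0 :=
  div_mul_cancel₀ _ (by linarith [M.lam0_pos, M.μ1_lt_ρ])

theorem a1_mul : M.a1 * (M.ρ + M.lam0 - M.μ2) = M.lam0 :=
  div_mul_cancel₀ _ (by linarith [M.lam0_pos, M.μ2_lt_ρ])

theorem a1_lt_one : M.a1 < 1 := by
  rw [a1, div_lt_one] <;> linarith [M.lam0_pos, M.μ2_lt_ρ]

end Roots

section FreeBoundary

theorem k_denominator_eq :
    (1 + M.η) * (M.δ1 * M.δ3 + M.γ2) - (M.δ3 + M.η * M.δ1) * M.γ2 - (M.δ1 + M.η * M.δ3) -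
        M.a1 * (M.γ2 - 1) * (M.δ1 - M.δ3) =
      (1 - M.δ1) * (1 - M.δ3) * (M.γ2 - M.δ1) * (M.δ1 - M.δ3) /
        ((1 - M.γ1) * (M.γ1 - M.δ3)) := by
  rw [η_eq, a1_eq]
  field_simp [M.one_sub_γ1_pos.ne', M.γ2_sub_one_pos.ne', M.γ1_sub_δ3_pos.ne', M.γ2_sub_δ3_pos.ne']
  ring

theorem k_numerator_eq :
    M.δ1 * M.δ3 * (1 + M.η) - (M.δ3 + M.η * M.δ1) * M.γ2 - M.a0 * (M.δ1 - M.δ3) * M.γ2 =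
      M.δ1 * M.δ3 * (M.γ2 - M.δ1) * (M.δ1 - M.δ3) / (-M.γ1 * (M.γ1 - M.δ3)) := by
  rw [η_eq, a0_eq]
  field_simp [M.γ1_neg.ne, M.γ2_pos.ne', M.γ1_sub_δ3_pos.ne', M.γ2_sub_δ3_pos.ne']
  ring

theorem C2_denominator_eq :
    (1 + M.η) * (M.δ1 * M.δ3 + M.γ2) - M.δ1 * ((M.a1 + M.η) * M.γ2 + (1 - M.a1)) -
        M.δ3 * ((M.a1 + M.η) + M.γ2 * (1 - M.a1)) =
      (1 - M.δ1) * (1 - M.δ3) * (M.γ2 - M.δ1) * (M.δ1 - M.δ3) /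
        ((1 - M.γ1) * (M.γ1 - M.δ3)) := by
  rw [← k_denominator_eq]
  ring

theorem C2_numerator_eq :
    (1 - M.a0) * (M.η + M.a1) * (1 - M.δ1) * (-M.δ3) +
        (1 - M.a1) * (M.η + M.a0) * (1 - M.δ3) * M.δ1 =
      (M.δ1 - M.γ1) * (M.γ2 - M.δ1) * (M.δ1 * M.δ3 * (1 - M.δ1) * (1 - M.δ3) * (M.δ1 - M.δ3)) /
        ((M.γ1 - M.δ3) * (M.γ2 - M.δ3) * (-M.γ1 * M.γ2 * (1 - M.γ1) * (M.γ2 - 1))) := by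
  rw [η_eq, a0_eq, a1_eq]
  field_simp [M.γ1_neg.ne, M.one_sub_γ1_pos.ne', M.γ2_sub_one_pos.ne', M.γ2_pos.ne',
    M.γ1_sub_δ3_pos.ne', M.γ2_sub_δ3_pos.ne']
  ring

theorem βb_mul_k_eq :
    M.βb * M.k =
      M.βs * (-M.δ1 * -M.δ3 * (1 - M.γ1) / (-M.γ1 * (1 - M.δ1) * (1 - M.δ3))) := by
  rw [k, k_numerator_eq, k_denominator_eq]
  field_simp [M.γ1_neg.ne, M.one_sub_δ1_pos.ne', M.one_sub_δ3_pos.ne', M.γ1_sub_δ3_pos.ne',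
    M.γ2_sub_δ1_pos.ne', M.δ1_sub_δ3_pos.ne', M.βb_pos.ne']

theorem k_pos : 0 < M.k := by
  have hδ1 := neg_pos.2 M.δ1_neg
  have hδ3 := neg_pos.2 M.δ3_neg
  have hγ := neg_pos.2 M.γ1_neg
  have h : 0 < M.βb * M.k := by
    rw [βb_mul_k_eq]
    have := M.βs_pos
    have := M.one_sub_γ1_pos
    have := M.one_sub_δ1_pos
    have := M.one_sub_δ3_pos
    positivity
  exact pos_of_mul_pos_right h M.βb_pos.le

theorem C1_mul_rpow_k :
    M.C1 * M.k ^ M.δ1 = (-M.δ3 * M.βs + (M.δ3 - 1) * (M.βb * M.k)) / (M.δ1 - M.δ3) := by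
  rw [C1]
  field_simp [(Real.rpow_pos_of_pos M.k_pos M.δ1).ne', M.δ1_sub_δ3_pos.ne']

theorem C3_mul_rpow_k :
    M.C3 * M.k ^ M.δ3 = (M.δ1 * M.βs - (M.δ1 - 1) * (M.βb * M.k)) / (M.δ1 - M.δ3) := by
  rw [C3]
  field_simp [(Real.rpow_pos_of_pos M.k_pos M.δ3).ne', M.δ1_sub_δ3_pos.ne']

theorem w1_value_fit :
    M.C1 * M.k ^ M.δ1 + M.C3 * M.k ^ M.δ3 = M.βs - M.βb * M.k := by
  rw [C1_mul_rpow_k, C3_mul_rpow_k]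
  field_simp [M.δ1_sub_δ3_pos.ne']
  ring

theorem w1_slope_fit :
    M.δ1 * (M.C1 * M.k ^ M.δ1) + M.δ3 * (M.C3 * M.k ^ M.δ3) = -(M.βb * M.k) := by
  rw [C1_mul_rpow_k, C3_mul_rpow_k]
  field_simp [M.δ1_sub_δ3_pos.ne']
  ring

theorem C1_mul_rpow_k_eq :
    M.C1 * M.k ^ M.δ1 =
      M.βs * (-M.δ3 * (M.δ1 - M.γ1) / (-M.γ1 * (1 - M.δ1) * (M.δ1 - M.δ3))) := by
  rw [C1_mul_rpow_k, βb_mul_k_eq]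
  field_simp [M.γ1_neg.ne, M.one_sub_δ1_pos.ne', M.one_sub_δ3_pos.ne', M.δ1_sub_δ3_pos.ne']
  ring

theorem C3_mul_rpow_k_eq :
    M.C3 * M.k ^ M.δ3 =
      M.βs * (-M.δ1 * (M.γ1 - M.δ3) / (-M.γ1 * (1 - M.δ3) * (M.δ1 - M.δ3))) := by
  rw [C3_mul_rpow_k, βb_mul_k_eq]
  field_simp [M.γ1_neg.ne, M.one_sub_δ1_pos.ne', M.one_sub_δ3_pos.ne', M.δ1_sub_δ3_pos.ne']
  ring

theorem C2_mul_rpow_k_eq :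
    M.C2 * M.k ^ M.γ2 =
      M.βs * (-M.δ1 * -M.δ3 * (M.δ1 - M.γ1) / (-M.γ1 * M.γ2 * (M.γ2 - 1) * (M.γ2 - M.δ3))) := by
  rw [C2, C2_numerator_eq, C2_denominator_eq]
  field_simp [M.γ1_neg.ne, M.one_sub_δ1_pos.ne', M.one_sub_δ3_pos.ne', M.one_sub_γ1_pos.ne',
    M.γ1_sub_δ3_pos.ne', M.γ2_sub_δ1_pos.ne', M.δ1_sub_δ3_pos.ne', M.γ2_sub_one_pos.ne',
    M.γ2_pos.ne', M.γ2_sub_δ3_pos.ne', (Real.rpow_pos_of_pos M.k_pos M.γ2).ne']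

theorem w0_value_fit :
    M.C2 * M.k ^ M.γ2 + M.a0 * M.βs - M.a1 * (M.βb * M.k) =
      M.C1 * M.k ^ M.δ1 - M.η * (M.C3 * M.k ^ M.δ3) := by
  rw [C2_mul_rpow_k_eq, C1_mul_rpow_k_eq, C3_mul_rpow_k_eq, βb_mul_k_eq, η_eq, a0_eq, a1_eq]
  field_simp [M.γ1_neg.ne, M.one_sub_δ1_pos.ne', M.one_sub_δ3_pos.ne', M.one_sub_γ1_pos.ne',
    M.γ1_sub_δ3_pos.ne', M.γ2_sub_δ1_pos.ne', M.δ1_sub_δ3_pos.ne', M.γ2_sub_one_pos.ne',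
    M.γ2_pos.ne', M.γ2_sub_δ3_pos.ne']
  ring

theorem C1_pos : 0 < M.C1 := by
  have hδ := neg_pos.2 M.δ3_neg
  have hγ := neg_pos.2 M.γ1_neg
  have h : 0 < M.C1 * M.k ^ M.δ1 := by
    rw [C1_mul_rpow_k_eq]
    have := M.βs_pos
    have := M.one_sub_δ1_pos
    have := M.δ1_sub_γ1_pos
    have := M.δ1_sub_δ3_pos
    positivity
  exact pos_of_mul_pos_left h (Real.rpow_nonneg M.k_pos.le _)

theorem C3_pos : 0 < M.C3 := by
  have hδ := neg_pos.2 M.δ1_neg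
  have hγ := neg_pos.2 M.γ1_neg
  have h : 0 < M.C3 * M.k ^ M.δ3 := by
    rw [C3_mul_rpow_k_eq]
    have := M.βs_pos
    have := M.one_sub_δ3_pos
    have := M.γ1_sub_δ3_pos
    have := M.δ1_sub_δ3_pos
    positivity
  exact pos_of_mul_pos_left h (Real.rpow_nonneg M.k_pos.le _)

theorem C2_pos : 0 < M.C2 := by
  have hδ1 := neg_pos.2 M.δ1_neg
  have hδ3 := neg_pos.2 M.δ3_neg
  have hγ := neg_pos.2 M.γ1_neg
  have h : 0 < M.C2 * M.k ^ M.γ2 := by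
    rw [C2_mul_rpow_k_eq]
    have := M.βs_pos
    have := M.γ2_pos
    have := M.δ1_sub_γ1_pos
    have := M.γ2_sub_one_pos
    have := M.γ2_sub_δ3_pos
    positivity
  exact pos_of_mul_pos_left h (Real.rpow_nonneg M.k_pos.le _)

end FreeBoundary

section Generator

variable {M} {y : ℝ}

theorem w0_of_lt (hy : y < M.k) :
    M.w0 y = M.C2 * y ^ M.γ2 + M.a0 * M.βs - M.a1 * M.βb * y :=
  if_pos hy

theorem w1_of_lt (hy : y < M.k) : M.w1 y = M.βs - M.βb * y :=
  if_pos hy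

theorem w0_of_gt (hy : M.k < y) : M.w0 y = M.C1 * y ^ M.δ1 - M.η * M.C3 * y ^ M.δ3 :=
  if_neg hy.not_gt

theorem w1_of_gt (hy : M.k < y) : M.w1 y = M.C1 * y ^ M.δ1 + M.C3 * y ^ M.δ3 :=
  if_neg hy.not_gt

theorem generator_eq_sum {ι : Type*} {f : ℝ → ℝ} {t : Finset ι} {A e : ι → ℝ} (hy : y ≠ 0)
    (hf : f =ᶠ[𝓝 y] fun z ↦ ∑ i ∈ t, A i * z ^ e i) :
    M.generator f y = ∑ i ∈ t, M.symbol (e i) * (A i * y ^ e i) :=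
  eulerOperator_eq_sum _ _ _ hy hf

theorem generator_w0_of_lt (hy0 : y ≠ 0) (hy : y < M.k) :
    M.generator M.w0 y = (M.ρ + M.lam0) * (M.C2 * y ^ M.γ2) + M.μ1 * (M.a0 * M.βs) -
      M.μ2 * (M.a1 * M.βb * y) := by
  rw [generator_eq_sum (t := univ) (A := ![M.C2, M.a0 * M.βs, -(M.a1 * M.βb)])
    (e := ![M.γ2, 0, 1]) hy0]
  · simp [Fin.sum_univ_three, symbol_γ2, symbol_zero, symbol_one, sub_eq_add_neg]
  · filter_upwards [gt_mem_nhds hy] with z hz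
    simp [w0_of_lt hz, Fin.sum_univ_three, sub_eq_add_neg]

theorem generator_w1_of_lt (hy0 : y ≠ 0) (hy : y < M.k) :
    M.generator M.w1 y = M.μ1 * M.βs - M.μ2 * (M.βb * y) := by
  rw [generator_eq_sum (t := univ) (A := ![M.βs, -M.βb]) (e := ![0, 1]) hy0]
  · simp [symbol_zero, symbol_one, sub_eq_add_neg]
  · filter_upwards [gt_mem_nhds hy] with z hz
    simp [w1_of_lt hz, sub_eq_add_neg]

theorem generator_w0_of_gt (hy : M.k < y) :
    M.generator M.w0 y =
      M.ρ * (M.C1 * y ^ M.δ1) - (M.ρ + M.lam0 + M.lam1) * (M.η * M.C3 * y ^ M.δ3) := by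
  rw [generator_eq_sum (t := univ) (A := ![M.C1, -(M.η * M.C3)]) (e := ![M.δ1, M.δ3])
    (M.k_pos.trans hy).ne']
  · simp [symbol_δ1, symbol_δ3, sub_eq_add_neg]
  · filter_upwards [lt_mem_nhds hy] with z hz
    simp [w0_of_gt hz, sub_eq_add_neg]

theorem generator_w1_of_gt (hy : M.k < y) :
    M.generator M.w1 y =
      M.ρ * (M.C1 * y ^ M.δ1) + (M.ρ + M.lam0 + M.lam1) * (M.C3 * y ^ M.δ3) := by
  rw [generator_eq_sum (t := univ) (A := ![M.C1, M.C3]) (e := ![M.δ1, M.δ3])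
    (M.k_pos.trans hy).ne']
  · simp [symbol_δ1, symbol_δ3]
  · filter_upwards [lt_mem_nhds hy] with z hz
    simp [w1_of_gt hz]

end Generator

section StoppingSurplus

/-- The excess `(ρ + λ₁) w₁ - L w₁ - λ₁ w₀`, computed from the formulas that hold below the free
boundary; at `y = k` it is therefore a limit from the left. -/
noncomputable def stoppingSurplus (y : ℝ) : ℝ :=
  (M.ρ + M.lam1 - M.μ1) * M.βs - (M.ρ + M.lam1 - M.μ2) * (M.βb * y) -
    M.lam1 * (M.C2 * y ^ M.γ2 + M.a0 * M.βs - M.a1 * (M.βb * y))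

theorem stoppingSurplus_of_lt {y : ℝ} (hy0 : y ≠ 0) (hy : y < M.k) :
    M.stoppingSurplus y =
      (M.ρ + M.lam1) * M.w1 y - M.generator M.w1 y - M.lam1 * M.w0 y := by
  rw [stoppingSurplus, generator_w1_of_lt hy0 hy, w0_of_lt hy, w1_of_lt hy]
  ring

theorem stoppingSurplus_antitoneOn : AntitoneOn M.stoppingSurplus (Set.Ici 0) := by
  intro x (hx : 0 ≤ x) y _ hxy
  have hslope : 0 ≤ M.ρ + M.lam1 - M.μ2 - M.lam1 * M.a1 := by
    linarith [mul_lt_mul_of_pos_left M.a1_lt_one M.lam1_pos, M.μ2_lt_ρ]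
  have hlinear : (M.ρ + M.lam1 - M.μ2 - M.lam1 * M.a1) * (M.βb * x) ≤
      (M.ρ + M.lam1 - M.μ2 - M.lam1 * M.a1) * (M.βb * y) := by
    have := M.βb_pos
    gcongr
  have hpower : M.lam1 * (M.C2 * x ^ M.γ2) ≤ M.lam1 * (M.C2 * y ^ M.γ2) := by
    have := M.lam1_pos
    have := M.C2_pos
    have := M.γ2_pos
    gcongr
  rw [stoppingSurplus, stoppingSurplus]
  linarith

/-- The right-hand side is `σ k² w₁''(k+)`: the surplus vanishes to the right of `k`, and by smooth
fit `w₁''` is the only term that jumps. -/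
theorem stoppingSurplus_k :
    M.stoppingSurplus M.k =
      M.σ * (M.δ1 * (M.δ1 - 1) * (M.C1 * M.k ^ M.δ1) +
        M.δ3 * (M.δ3 - 1) * (M.C3 * M.k ^ M.δ3)) := by
  have h1 := M.symbol_δ1
  have h3 := M.symbol_δ3
  rw [symbol, indicial] at h1 h3
  rw [stoppingSurplus, w0_value_fit]
  linear_combination
    (M.μ1 - M.ρ - M.lam1) * M.w1_value_fit + (M.μ2 - M.μ1) * M.w1_slope_fit -
      M.C1 * M.k ^ M.δ1 * h1 - M.C3 * M.k ^ M.δ3 * h3 + M.C3 * M.k ^ M.δ3 * M.lam1_mul_η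

theorem stoppingSurplus_k_pos : 0 < M.stoppingSurplus M.k := by
  have hδ1 : 0 < M.δ1 * (M.δ1 - 1) := by nlinarith [M.δ1_neg]
  have hδ3 : 0 < M.δ3 * (M.δ3 - 1) := by nlinarith [M.δ3_neg]
  rw [stoppingSurplus_k]
  have := M.σ_pos
  have := M.C1_pos
  have := M.C3_pos
  have := M.k_pos
  positivity

end StoppingSurplus

section HJB

variable {M} {y : ℝ}

theorem hjb_w0_of_lt (hy0 : y ≠ 0) (hy : y < M.k) :
    (M.ρ + M.lam0) * M.w0 y - M.generator M.w0 y = M.lam0 * M.w1 y := by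
  rw [generator_w0_of_lt hy0 hy, w0_of_lt hy, w1_of_lt hy]
  linear_combination M.βs * M.a0_mul - M.βb * y * M.a1_mul

theorem hjb_w0_of_gt (hy : M.k < y) :
    (M.ρ + M.lam0) * M.w0 y - M.generator M.w0 y = M.lam0 * M.w1 y := by
  rw [generator_w0_of_gt hy, w0_of_gt hy, w1_of_gt hy]
  linear_combination M.C3 * y ^ M.δ3 * M.lam1_mul_η

theorem hjb_w1_of_gt (hy : M.k < y) :
    (M.ρ + M.lam1) * M.w1 y - M.generator M.w1 y = M.lam1 * M.w0 y := by
  rw [generator_w1_of_gt hy, w0_of_gt hy, w1_of_gt hy]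
  linear_combination M.C3 * y ^ M.δ3 * M.lam1_mul_η

theorem payoff_le_w1_of_gt (hy : M.k < y) : M.βs - M.βb * y ≤ M.w1 y := by
  have hk := M.k_pos
  have hy0 := hk.trans hy
  have hC1 := M.C1_pos
  have hC3 := M.C3_pos
  calc M.βs - M.βb * y
      = M.C1 * (M.k ^ M.δ1 * (1 + M.δ1 * (y / M.k - 1))) +
          M.C3 * (M.k ^ M.δ3 * (1 + M.δ3 * (y / M.k - 1))) := by
        have : M.k * (y / M.k) = y := mul_div_cancel₀ _ hk.ne'
        linear_combination M.βb * this - M.w1_value_fit - (y / M.k - 1) * M.w1_slope_fit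
    _ ≤ M.C1 * y ^ M.δ1 + M.C3 * y ^ M.δ3 := by
        gcongr
        · exact rpow_mul_one_add_le_rpow hk hy0 M.δ1_neg.le
        · exact rpow_mul_one_add_le_rpow hk hy0 M.δ3_neg.le
    _ = M.w1 y := (w1_of_gt hy).symm

theorem hjb_w1_of_lt (hy0 : 0 < y) (hy : y < M.k) :
    M.lam1 * M.w0 y ≤ (M.ρ + M.lam1) * M.w1 y - M.generator M.w1 y := by
  have hmono : M.stoppingSurplus M.k ≤ M.stoppingSurplus y :=
    M.stoppingSurplus_antitoneOn hy0.le M.k_pos.le hy.le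
  rw [stoppingSurplus_of_lt M hy0.ne' hy] at hmono
  linarith [M.stoppingSurplus_k_pos]

end HJB

end SwitchingMarket

open SwitchingMarket in
theorem stmt_15_general (M : SwitchingMarket) :
    (∀ y : ℝ, 0 < y → y < M.k →
      (M.ρ + M.lam0) * M.w0 y - M.generator M.w0 y = M.lam0 * M.w1 y ∧
      (M.ρ + M.lam1) * M.w1 y - M.generator M.w1 y ≥ M.lam1 * M.w0 y ∧
      M.w1 y = M.βs - M.βb * y) ∧
    (∀ y : ℝ, M.k < y →
      (M.ρ + M.lam0) * M.w0 y - M.generator M.w0 y = M.lam0 * M.w1 y ∧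
      (M.ρ + M.lam1) * M.w1 y - M.generator M.w1 y = M.lam1 * M.w0 y ∧
      M.w1 y ≥ M.βs - M.βb * y) :=
  ⟨fun _ hy0 hy ↦ ⟨hjb_w0_of_lt hy0.ne' hy, hjb_w1_of_lt hy0 hy, w1_of_lt hy⟩,
    fun _ hy ↦ ⟨hjb_w0_of_gt hy, hjb_w1_of_gt hy, payoff_le_w1_of_gt hy⟩⟩

theorem stmt_15 (μ1 μ2 ρ σ lam0 lam1 K βs βb η a0 a1 m δ1 δ3 γ2 k C1 C2 C3 : ℝ)
    (w0 w1 : ℝ → ℝ)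
    (hσ : 0 < σ) (hlam0 : 0 < lam0) (hlam1 : 0 < lam1)
    (hμ1 : μ1 < ρ) (hμ2 : μ2 < ρ)
    (hm : m = 1 + (μ1 - μ2) / σ)
    (hK0 : 0 < K) (hK1 : K < 1) (hβs : βs = 1 - K) (hβb : βb = 1 + K)
    (hη : η = lam0 / lam1) (ha0 : a0 = lam0 / (ρ + lam0 - μ1)) (ha1 : a1 = lam0 / (ρ + lam0 - μ2))
    (hδ1 : δ1 = (m - Real.sqrt (m ^ 2 + 4 * (ρ - μ1) / σ)) / 2)
    (hδ3 : δ3 = (m - Real.sqrt (m ^ 2 + 4 * (ρ + lam0 + lam1 - μ1) / σ)) / 2)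
    (hγ2 : γ2 = (m + Real.sqrt (m ^ 2 + 4 * (ρ + lam0 - μ1) / σ)) / 2)
    (hk : k = (δ1 * δ3 * (1 + η) - (δ3 + η * δ1) * γ2 - a0 * (δ1 - δ3) * γ2) /
      ((1 + η) * (δ1 * δ3 + γ2) - (δ3 + η * δ1) * γ2 - (δ1 + η * δ3) - a1 * (γ2 - 1) * (δ1 - δ3)) *
      (βs / βb))
    (hC1 : C1 = (-δ3 * βs + (δ3 - 1) * βb * k) / ((δ1 - δ3) * k ^ δ1))
    (hC3 : C3 = (δ1 * βs - (δ1 - 1) * βb * k) / ((δ1 - δ3) * k ^ δ3))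
    (hC2 : C2 = ((1 - a0) * (η + a1) * (1 - δ1) * (-δ3) + (1 - a1) * (η + a0) * (1 - δ3) * δ1) * βs /
      (((1 + η) * (δ1 * δ3 + γ2) - δ1 * ((a1 + η) * γ2 + (1 - a1)) - δ3 * ((a1 + η) + γ2 * (1 - a1))) *
        k ^ γ2))
    (hw0 : ∀ y : ℝ, w0 y =
      if y < k then C2 * y ^ γ2 + a0 * βs - a1 * βb * y else C1 * y ^ δ1 - η * C3 * y ^ δ3)
    (hw1 : ∀ y : ℝ, w1 y =
      if y < k then βs - βb * y else C1 * y ^ δ1 + C3 * y ^ δ3) :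
    (∀ y : ℝ, 0 < y → y < k →
      (ρ + lam0) * w0 y -
          (σ * y ^ 2 * deriv (deriv w0) y + (μ2 - μ1) * y * deriv w0 y + μ1 * w0 y) =
        lam0 * w1 y ∧
      (ρ + lam1) * w1 y -
          (σ * y ^ 2 * deriv (deriv w1) y + (μ2 - μ1) * y * deriv w1 y + μ1 * w1 y) ≥
        lam1 * w0 y ∧
      w1 y = βs - βb * y) ∧
    (∀ y : ℝ, k < y →
      (ρ + lam0) * w0 y -
          (σ * y ^ 2 * deriv (deriv w0) y + (μ2 - μ1) * y * deriv w0 y + μ1 * w0 y) =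
        lam0 * w1 y ∧
      (ρ + lam1) * w1 y -
          (σ * y ^ 2 * deriv (deriv w1) y + (μ2 - μ1) * y * deriv w1 y + μ1 * w1 y) =
        lam1 * w0 y ∧
      w1 y ≥ βs - βb * y) := by
  subst hm hη ha0 ha1 hδ1 hδ3 hγ2 hk hC1 hC2 hC3
  obtain rfl := funext hw0
  obtain rfl := funext hw1
  exact stmt_15_general ⟨μ1, μ2, ρ, σ, lam0, lam1, βs, βb, hσ, hlam0, hlam1, hμ1, hμ2,
    by linarith, by linarith⟩
end

section
/- Let C1 > 0, C3 > 0, δ1 < 0, δ3 < 0, β_b > 0, β_s be real numbers and k > 0. Define φ(y) = C1 y^{δ1} + C3 y^{δ3} − β_s + β_b y on (0,∞). If φ(k) = 0 and φ'(k) = 0, then φ(y) > 0 for all y > k. -/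
/-! The second derivative of `c x ^ p` is `c p (p - 1) x ^ (p - 2)`, which is positive on `(0, ∞)`
when `0 < c` and `p < 0`. So `φ` is strictly convex on it, being a sum of two such functions and an
affine one, and away from `k` it lies strictly above its tangent line there, the horizontal axis. -/

theorem lt_of_strictConvexOn_of_hasDerivAt_zero {S : Set ℝ} {f : ℝ → ℝ} {x y : ℝ}
    (hf : StrictConvexOn ℝ S f) (hx : x ∈ S) (hy : y ∈ S) (hyx : y ≠ x)
    (hfx : HasDerivAt f 0 x) : f x < f y := by
  rcases hyx.lt_or_gt with hlt | hgt
  · exact (slope_neg_iff_of_le hlt.le).1 (hf.slope_lt_of_hasDerivAt hy hx hlt hfx)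
  · exact (slope_pos_iff_of_le hgt.le).1 (hf.lt_slope_of_hasDerivAt hx hy hgt hfx)

theorem deriv2_const_mul_rpow (c p x : ℝ) :
    deriv^[2] (fun x : ℝ ↦ c * x ^ p) x = c * (p * (p - 1)) * x ^ (p - 2) := by
  simp only [Function.iterate_succ, Function.iterate_zero, Function.comp_apply, id_eq,
    deriv_const_mul_field', Real.deriv_rpow_const]
  ring_nf

theorem strictConvexOn_const_mul_rpow {c p : ℝ} (hcp : 0 < c * (p * (p - 1))) :
    StrictConvexOn ℝ (Set.Ioi 0) fun x : ℝ ↦ c * x ^ p := by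
  refine strictConvexOn_of_deriv2_pos' (convex_Ioi 0) ?_ fun x hx ↦ ?_
  · exact continuousOn_const.mul (continuousOn_id.rpow_const fun x hx ↦ .inl (ne_of_gt hx))
  · rw [deriv2_const_mul_rpow]
    exact mul_pos hcp (Real.rpow_pos_of_pos hx _)

section RpowAddRpowAddAffine

variable {a b p q r m : ℝ}

theorem strictConvexOn_rpow_add_rpow_sub_const_add_linear
    (hap : 0 < a * (p * (p - 1))) (hbq : 0 < b * (q * (q - 1))) :
    StrictConvexOn ℝ (Set.Ioi 0) fun x : ℝ ↦ a * x ^ p + b * x ^ q - r + m * x :=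
  (((strictConvexOn_const_mul_rpow hap).add (strictConvexOn_const_mul_rpow hbq)).sub_concaveOn
    (concaveOn_const r (convex_Ioi 0))).add_convexOn
      ((LinearMap.mulLeft ℝ m).convexOn (convex_Ioi 0))

theorem differentiableAt_rpow_add_rpow_sub_const_add_linear {x : ℝ} (hx : x ≠ 0) :
    DifferentiableAt ℝ (fun x : ℝ ↦ a * x ^ p + b * x ^ q - r + m * x) x := by
  fun_prop (disch := exact .inl hx)

end RpowAddRpowAddAffine

theorem stmt_16_general {C1 C3 δ1 δ3 βs βb k : ℝ} {φ : ℝ → ℝ}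
    (h1 : 0 < C1 * (δ1 * (δ1 - 1))) (h3 : 0 < C3 * (δ3 * (δ3 - 1))) (hk : 0 < k)
    (hφ : Set.EqOn φ (fun y ↦ C1 * y ^ δ1 + C3 * y ^ δ3 - βs + βb * y) (Set.Ioi 0))
    (hφk : φ k = 0) (hφ'k : deriv φ k = 0) {y : ℝ} (hy : 0 < y) (hyk : y ≠ k) : 0 < φ y := by
  have hconvex : StrictConvexOn ℝ (Set.Ioi 0) φ :=
    (strictConvexOn_rpow_add_rpow_sub_const_add_linear h1 h3).congr hφ.symm
  have hdiff : DifferentiableAt ℝ φ k :=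
    (differentiableAt_rpow_add_rpow_sub_const_add_linear hk.ne').congr_of_eventuallyEq
      (hφ.eventuallyEq_of_mem (Ioi_mem_nhds hk))
  have hderiv : HasDerivAt φ 0 k := hφ'k ▸ hdiff.hasDerivAt
  exact hφk ▸ lt_of_strictConvexOn_of_hasDerivAt_zero hconvex hk hy hyk hderiv

theorem stmt_16 (C1 C3 δ1 δ3 βs βb k : ℝ) (φ : ℝ → ℝ)
    (hC1 : 0 < C1) (hC3 : 0 < C3) (hδ1 : δ1 < 0) (hδ3 : δ3 < 0)
    (hβb : 0 < βb) (hk : 0 < k)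
    (hφ : ∀ y : ℝ, φ y = C1 * y ^ δ1 + C3 * y ^ δ3 - βs + βb * y)
    (hφk : φ k = 0) (hφ'k : deriv φ k = 0) :
    ∀ y : ℝ, k < y → 0 < φ y := by
  have coeff_pos {C δ : ℝ} (hC : 0 < C) (hδ : δ < 0) : 0 < C * (δ * (δ - 1)) :=
    mul_pos hC (mul_pos_of_neg_of_neg hδ (by linarith))
  exact fun y hy ↦ stmt_16_general (coeff_pos hC1 hδ1) (coeff_pos hC3 hδ3) hk
    (fun x _ ↦ hφ x) hφk hφ'k (hk.trans hy) hy.ne'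
end
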